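/- For every ε > 0 there is a constant C(ε) such that for all T ≥ 10, with y = T^{3/4}: Σ over quadruples of positive integers n₁, n₂, n₃, n₄ ≤ y with √n₁ + √n₂ − √n₃ − √n₄ ≠ 0 of d(n₁)d(n₂)d(n₃)d(n₄)/(n₁n₂n₃n₄)^{3/4} · min(T², T^{3/2}/|√n₁ + √n₂ − √n₃ − √n₄|) ≤ C(ε) · T^{2−1/8+ε}. -/

import Mathlib

open Real MeasureTheory Finset
open scoped Classical

noncomputable section


lemma aux_divisor_bound (ε : ℝ) (hε : 0 < ε) :
    ∃ C : ℝ, 1 ≤ C ∧ ∀ n : ℕ, 1 ≤ n → (n.divisors.card : ℝ) ≤ C * (n : ℝ) ^ ε := by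
  set P0 : ℕ := ⌈(2:ℝ) ^ (1/ε)⌉₊ with hP0
  have hl2 : 0 < Real.log 2 := Real.log_pos (by norm_num)
  set K : ℝ := max 1 (1 / (ε * Real.log 2)) with hK
  have hK1 : 1 ≤ K := le_max_left _ _
  have hK2 : 1 ≤ K * (ε * Real.log 2) := by
    have h : 1 / (ε * Real.log 2) ≤ K := le_max_right _ _
    have h0 : 0 < ε * Real.log 2 := by positivity
    rwa [div_le_iff₀ h0] at h
  refine ⟨K ^ P0, one_le_pow₀ hK1, ?_⟩
  intro n hn
  have hn0 : n ≠ 0 := by omega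
  have key : ∀ p ∈ n.primeFactors, ((n.factorization p + 1 : ℕ) : ℝ) ≤
      (if p < P0 then K else 1) * ((p : ℝ) ^ (n.factorization p)) ^ ε := by
    intro p hp
    have hpp : p.Prime := Nat.prime_of_mem_primeFactors hp
    set a := n.factorization p
    have hp2 : (2:ℝ) ≤ p := by exact_mod_cast hpp.two_le
    have e1 : ((p : ℝ) ^ a) ^ ε = ((p:ℝ) ^ ε) ^ a := by
      rw [← Real.rpow_natCast, ← Real.rpow_natCast, ← Real.rpow_mul (by positivity),
        ← Real.rpow_mul (by positivity), mul_comm]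
    rw [e1]
    split_ifs with h
    · have h1 : ((2:ℝ) ^ ε) ^ a ≤ ((p:ℝ) ^ ε) ^ a := by gcongr
      have h2 : 1 + a * (ε * Real.log 2) ≤ ((2:ℝ) ^ ε) ^ a := by
        have : ((2:ℝ) ^ ε) ^ a = Real.exp (a * (ε * Real.log 2)) := by
          rw [Real.rpow_def_of_pos (by norm_num), ← Real.exp_nat_mul]; ring_nf
        rw [this]
        linarith [Real.add_one_le_exp (a * (ε * Real.log 2))]
      have ha : (0:ℝ) ≤ a := Nat.cast_nonneg _
      push_cast
      calc (a:ℝ) + 1 ≤ K * (1 + a * (ε * Real.log 2)) := by nlinarith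
        _ ≤ K * ((p:ℝ) ^ ε) ^ a := by gcongr; exact h2.trans h1
    · have hpP : (2:ℝ) ^ (1/ε) ≤ p := by
        have : P0 ≤ p := by omega
        exact (Nat.le_ceil _).trans (by exact_mod_cast this)
      have h1 : (2:ℝ) ≤ (p:ℝ) ^ ε := by
        calc (2:ℝ) = ((2:ℝ) ^ (1/ε)) ^ ε := by
              rw [← Real.rpow_mul (by norm_num)]; field_simp; simp
          _ ≤ _ := by gcongr
      rw [one_mul]
      calc ((a+1:ℕ):ℝ) ≤ ((2^a : ℕ):ℝ) := by exact_mod_cast Nat.lt_two_pow_self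
        _ = (2:ℝ)^a := by push_cast; rfl
        _ ≤ _ := by gcongr
  rw [Nat.card_divisors hn0]
  have hprod : ((n:ℝ)) = ∏ p ∈ n.primeFactors, ((p:ℝ) ^ (n.factorization p)) := by
    conv_lhs => rw [← Nat.prod_factorization_pow_eq_self hn0]
    rw [Finsupp.prod]
    push_cast
    rfl
  push_cast
  calc ∏ p ∈ n.primeFactors, ((n.factorization p : ℝ) + 1)
      ≤ ∏ p ∈ n.primeFactors, ((if p < P0 then K else 1) * ((p : ℝ) ^ (n.factorization p)) ^ ε) := by
        apply Finset.prod_le_prod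
        · intros; positivity
        · intro p hp
          have := key p hp
          push_cast at this
          exact this
    _ = (∏ p ∈ n.primeFactors, (if p < P0 then K else 1)) * (n:ℝ) ^ ε := by
        rw [Finset.prod_mul_distrib, Real.finset_prod_rpow _ _ (by intros; positivity), ← hprod]
    _ ≤ K ^ P0 * (n:ℝ) ^ ε := by
        gcongr
        rw [← Finset.prod_filter, Finset.prod_const]
        apply pow_le_pow_right₀ hK1
        calc _ ≤ (Finset.range P0).card := by
              apply Finset.card_le_card
              intro p hp
              simp at hp ⊢
              exact hp.2
          _ = P0 := by simp


/-- number of representations -/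
def rep {α β : Type} (P : Finset α) (f : α → β) (d : β) : ℕ := (P.filter (fun x => f x = d)).card

/-- additive energy of a map -/
def eng {α β : Type} (P : Finset α) (f : α → β) : ℕ :=
  ((P ×ˢ P).filter (fun z => f z.1 = f z.2)).card

lemma eng_eq {α β : Type} (P : Finset α) (f : α → β) (D : Finset β)
    (hD : ∀ x ∈ P, f x ∈ D) : eng P f = ∑ d ∈ D, rep P f d ^ 2 := by
  unfold eng rep
  rw [Finset.card_eq_sum_card_fiberwise (f := fun z => f z.1) (t := D)]
  · apply Finset.sum_congr rfl
    intro d _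
    rw [sq, ← Finset.card_product]
    congr 1
    ext ⟨x, y⟩
    simp only [Finset.mem_filter, Finset.mem_product]
    constructor
    · rintro ⟨⟨⟨h1, h2⟩, h3⟩, h4⟩
      exact ⟨⟨h1, h4⟩, h2, h3 ▸ h4⟩
    · rintro ⟨⟨h1, h2⟩, h3, h4⟩
      exact ⟨⟨⟨h1, h3⟩, h2.trans h4.symm⟩, h2⟩
  · intro z hz
    simp at hz
    exact hD _ hz.1.1

lemma eng_ge {α β : Type} (P : Finset α) (f : α → β) (D : Finset β) :
    ∑ d ∈ D, rep P f d ^ 2 ≤ eng P f := by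
  rw [eng_eq P f (D ∪ P.image f) (fun x hx => Finset.mem_union_right _ (Finset.mem_image_of_mem _ hx))]
  exact Finset.sum_le_sum_of_subset Finset.subset_union_left

lemma sum_rep_le {α β : Type} (P : Finset α) (f : α → β) (D : Finset β) :
    ∑ d ∈ D, rep P f d ≤ P.card := by
  unfold rep
  rw [← Finset.card_biUnion]
  · apply Finset.card_le_card
    intro x hx
    simp only [Finset.mem_biUnion, Finset.mem_filter] at hx
    obtain ⟨a, _, hx, _⟩ := hx
    exact hx
  · intro a _ b _ hab
    simp only [Function.onFun, Finset.disjoint_left, Finset.mem_filter]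
    rintro x ⟨_, h⟩ ⟨_, h'⟩
    exact hab (h ▸ h')

/-- Cauchy-Schwarz refinement -/
lemma eng_refine {α β γ : Type} (P : Finset α) (f : α → β) (g : α → γ) (S : Finset γ)
    (hS : ∀ x ∈ P, g x ∈ S) : eng P f ≤ S.card * eng P (fun x => (f x, g x)) := by
  rw [eng_eq P f (P.image f) (fun x hx => Finset.mem_image_of_mem _ hx),
    eng_eq P (fun x => (f x, g x)) (P.image f ×ˢ S)
      (fun x hx => Finset.mem_product.2 ⟨Finset.mem_image_of_mem _ hx, hS x hx⟩),
    Finset.sum_product, Finset.mul_sum]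
  apply Finset.sum_le_sum
  intro d _
  have : rep P f d = ∑ s ∈ S, rep P (fun x => (f x, g x)) (d, s) := by
    unfold rep
    rw [Finset.card_eq_sum_card_fiberwise (f := g) (t := S)]
    · apply Finset.sum_congr rfl
      intro s _
      congr 1
      ext x
      simp [Finset.mem_filter, and_assoc]
    · intro x hx
      simp at hx
      exact hS _ hx.1
  rw [this]
  exact_mod_cast sq_sum_le_card_mul_sum_sq

/-- pairs with close values -/
def closeCount {α β : Type} (P : Finset α) (Q : Finset β) (f : α → ℤ) (g : β → ℤ) : ℕ :=
  ((P ×ˢ Q).filter (fun z => |f z.1 - g z.2| ≤ 1)).card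

def third {α : Type} (P : Finset α) (f : α → ℤ) : ℕ :=
  ∑ d ∈ P.image f, rep P f d ^ 3

lemma closeCount_le {α β : Type} (P : Finset α) (Q : Finset β) (f : α → ℤ) (g : β → ℤ) :
    closeCount P Q f g ≤ ∑ e ∈ Finset.Icc (-1:ℤ) 1, ∑ d ∈ P.image f, rep P f d * rep Q g (d - e) := by
  unfold closeCount
  rw [Finset.card_eq_sum_card_fiberwise (f := fun z => f z.1 - g z.2) (t := Finset.Icc (-1:ℤ) 1)]
  · apply Finset.sum_le_sum
    intro e _
    rw [Finset.card_eq_sum_card_fiberwise (f := fun z => f z.1) (t := P.image f)]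
    · apply Finset.sum_le_sum
      intro d _
      unfold rep
      rw [← Finset.card_product]
      apply Finset.card_le_card
      rintro ⟨x, y⟩ h
      simp only [Finset.mem_filter, Finset.mem_product] at h ⊢
      obtain ⟨⟨⟨⟨h1, h2⟩, h3⟩, h4⟩, h5⟩ := h
      exact ⟨⟨h1, h5⟩, h2, by omega⟩
    · rintro ⟨x, y⟩ h
      simp only [Finset.coe_filter, Finset.mem_filter, Finset.mem_product, Set.mem_setOf_eq] at h
      exact Finset.mem_coe.2 (Finset.mem_image_of_mem f h.1.1.1)
  · rintro ⟨x, y⟩ h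
    simp only [Finset.coe_filter, Finset.mem_product, Set.mem_setOf_eq] at h
    simpa [abs_le] using h.2

lemma rep_shift_sq {β : Type} (Q : Finset β) (g : β → ℤ) (D : Finset ℤ) (e : ℤ) :
    ∑ d ∈ D, rep Q g (d - e) ^ 2 ≤ eng Q g := by
  have := eng_ge Q g (D.image (fun d => d - e))
  rwa [Finset.sum_image (by intro a _ b _ h; simpa using h)] at this

lemma rep_shift {β : Type} (Q : Finset β) (g : β → ℤ) (D : Finset ℤ) (e : ℤ) :
    ∑ d ∈ D, rep Q g (d - e) ≤ Q.card := by
  have := sum_rep_le Q g (D.image (fun d => d - e))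
  rwa [Finset.sum_image (by intro a _ b _ h; simpa using h)] at this

lemma closeCount_sq {α β : Type} (P : Finset α) (Q : Finset β) (f : α → ℤ) (g : β → ℤ) :
    (closeCount P Q f g)^2 ≤ 9 * (eng P f * eng Q g) := by
  have h1 := closeCount_le P Q f g
  have h2 : ∀ e : ℤ, (∑ d ∈ P.image f, rep P f d * rep Q g (d - e))^2 ≤ eng P f * eng Q g := by
    intro e
    calc _ ≤ (∑ d ∈ P.image f, rep P f d ^ 2) * (∑ d ∈ P.image f, rep Q g (d - e) ^ 2) :=
          Finset.sum_mul_sq_le_sq_mul_sq _ _ _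
      _ ≤ _ := Nat.mul_le_mul (eng_ge _ _ _) (rep_shift_sq _ _ _ _)
  calc (closeCount P Q f g)^2 ≤ (∑ e ∈ Finset.Icc (-1:ℤ) 1, ∑ d ∈ P.image f, rep P f d * rep Q g (d - e))^2 := by gcongr
    _ ≤ (Finset.Icc (-1:ℤ) 1).card * ∑ e ∈ Finset.Icc (-1:ℤ) 1, (∑ d ∈ P.image f, rep P f d * rep Q g (d - e))^2 := by
        exact_mod_cast sq_sum_le_card_mul_sum_sq
    _ ≤ (Finset.Icc (-1:ℤ) 1).card * ∑ e ∈ Finset.Icc (-1:ℤ) 1, eng P f * eng Q g := by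
        gcongr with e _
        exact h2 e
    _ = 9 * (eng P f * eng Q g) := by
        rw [Finset.sum_const]; simp; ring

lemma holder3 {ι : Type} (D : Finset ι) (r s : ι → ℝ) (hr : ∀ i, 0 ≤ r i) (hs : ∀ i, 0 ≤ s i) :
    (∑ i ∈ D, r i * s i)^3 ≤ (∑ i ∈ D, r i ^ 3) * ((∑ i ∈ D, s i) * (∑ i ∈ D, s i ^ 2)) := by
  have hpq : Real.HolderConjugate 3 (3/2) := by
    rw [Real.holderConjugate_iff]; norm_num
  have h := Real.inner_le_Lp_mul_Lq_of_nonneg D hpq (fun i _ => hr i) (fun i _ => hs i)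
  have hx : 0 ≤ ∑ i ∈ D, r i * s i := Finset.sum_nonneg (fun i _ => mul_nonneg (hr i) (hs i))
  have e1 : ∀ i, r i ^ (3:ℝ) = r i ^ 3 := fun i => by exact_mod_cast Real.rpow_natCast (r i) 3
  simp only [e1] at h
  have hA : 0 ≤ ∑ i ∈ D, r i ^ 3 := Finset.sum_nonneg (fun i _ => pow_nonneg (hr i) _)
  have hB : 0 ≤ ∑ i ∈ D, s i ^ (3/2:ℝ) := Finset.sum_nonneg (fun i _ => Real.rpow_nonneg (hs i) _)
  have h2 : (∑ i ∈ D, s i ^ (3/2:ℝ))^2 ≤ (∑ i ∈ D, s i) * (∑ i ∈ D, s i ^ 2) := by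
    have := Finset.sum_mul_sq_le_sq_mul_sq D (fun i => s i ^ (1/2:ℝ)) s
    have e2 : ∀ i, s i ^ (1/2:ℝ) * s i = s i ^ (3/2:ℝ) := by
      intro i
      rcases (hs i).eq_or_lt with h0 | h0
      · rw [← h0]; norm_num
      · nth_rewrite 2 [← Real.rpow_one (s i)]
        rw [← Real.rpow_add h0]; norm_num
    have e3 : ∀ i, (s i ^ (1/2:ℝ))^2 = s i := by
      intro i
      rw [← Real.rpow_natCast, ← Real.rpow_mul (hs i)]; norm_num
    simpa only [e2, e3] using this
  calc (∑ i ∈ D, r i * s i)^3 ≤ ((∑ i ∈ D, r i ^ 3) ^ (1/3:ℝ) * (∑ i ∈ D, s i ^ (3/2:ℝ)) ^ (1/(3/2):ℝ))^3 := by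
        gcongr
    _ = (∑ i ∈ D, r i ^ 3) * (∑ i ∈ D, s i ^ (3/2:ℝ))^2 := by
        rw [mul_pow, ← Real.rpow_natCast, ← Real.rpow_mul hA, ← Real.rpow_natCast, ← Real.rpow_mul hB,
          ← Real.rpow_natCast]
        norm_num
    _ ≤ _ := by gcongr

lemma closeCount_cube {α β : Type} (P : Finset α) (Q : Finset β) (f : α → ℤ) (g : β → ℤ) :
    ((closeCount P Q f g : ℕ) : ℝ)^3 ≤ 27 * ((third P f : ℝ) * ((Q.card : ℝ) * (eng Q g : ℝ))) := by
  have h1 := closeCount_le P Q f g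
  set B : ℝ := (third P f : ℝ) * ((Q.card : ℝ) * (eng Q g : ℝ)) with hB
  have hB0 : 0 ≤ B := by positivity
  have h2 : ∀ e : ℤ, (((∑ d ∈ P.image f, rep P f d * rep Q g (d - e) : ℕ)) : ℝ)^3 ≤ B := by
    intro e
    push_cast
    refine (holder3 _ (fun d => (rep P f d : ℝ)) (fun d => (rep Q g (d - e) : ℝ)) (fun _ => by positivity)
      (fun _ => by positivity)).trans ?_
    rw [hB]
    have a1 : ∑ d ∈ P.image f, ((rep P f d : ℝ))^3 = (third P f : ℝ) := by
      unfold third; push_cast; rfl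
    have a2 : ∑ d ∈ P.image f, ((rep Q g (d - e) : ℝ)) ≤ (Q.card : ℝ) := by
      exact_mod_cast rep_shift Q g (P.image f) e
    have a3 : ∑ d ∈ P.image f, ((rep Q g (d - e) : ℝ))^2 ≤ (eng Q g : ℝ) := by
      exact_mod_cast rep_shift_sq Q g (P.image f) e
    rw [a1]
    gcongr
  have h3 : ∀ e : ℤ, (((∑ d ∈ P.image f, rep P f d * rep Q g (d - e) : ℕ)) : ℝ) ≤ B ^ (1/3:ℝ) := by
    intro e
    have := Real.rpow_le_rpow (by positivity) (h2 e) (by norm_num : (0:ℝ) ≤ 1/3)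
    rwa [← Real.rpow_natCast, ← Real.rpow_mul (by positivity),
      show ((3:ℕ):ℝ) * (1/3:ℝ) = 1 by norm_num, Real.rpow_one] at this
  have h4 : ((closeCount P Q f g : ℕ) : ℝ) ≤ 3 * B ^ (1/3:ℝ) := by
    calc ((closeCount P Q f g : ℕ) : ℝ) ≤ ((∑ e ∈ Finset.Icc (-1:ℤ) 1, ∑ d ∈ P.image f, rep P f d * rep Q g (d - e) : ℕ) : ℝ) := by
          exact_mod_cast h1
      _ ≤ ∑ e ∈ Finset.Icc (-1:ℤ) 1, B ^ (1/3:ℝ) := by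
          rw [Nat.cast_sum]
          exact Finset.sum_le_sum (fun e _ => h3 e)
      _ = 3 * B ^ (1/3:ℝ) := by rw [Finset.sum_const]; simp
  calc ((closeCount P Q f g : ℕ) : ℝ)^3 ≤ (3 * B ^ (1/3:ℝ))^3 := by gcongr
    _ = 27 * B := by
      rw [mul_pow, ← Real.rpow_natCast (B ^ (1/3:ℝ)), ← Real.rpow_mul hB0]; norm_num


lemma eng_split {α β : Type} (P : Finset α) (k : α → β) (h : α → ℕ)
    (hinj : ∀ x ∈ P, ∀ y ∈ P, k x = k y → h x = h y → x = y) :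
    eng P k ≤ P.card + 2 * ((P ×ˢ P).filter (fun z => k z.1 = k z.2 ∧ h z.1 < h z.2)).card := by
  unfold eng
  set U := (P ×ˢ P).filter (fun z => k z.1 = k z.2 ∧ h z.1 < h z.2) with hU
  have hsub : (P ×ˢ P).filter (fun z => k z.1 = k z.2) ⊆
      (P.image (fun x => (x, x))) ∪ (U ∪ U.image Prod.swap) := by
    rintro ⟨x, y⟩ hz
    simp only [Finset.mem_filter, Finset.mem_product] at hz
    obtain ⟨⟨hx, hy⟩, hk⟩ := hz
    simp only [Finset.mem_union, Finset.mem_image, hU, Finset.mem_filter, Finset.mem_product]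
    rcases lt_trichotomy (h x) (h y) with h1 | h1 | h1
    · right; left; exact ⟨⟨hx, hy⟩, hk, h1⟩
    · left; exact ⟨x, hx, by rw [hinj x hx y hy hk h1]⟩
    · right; right; exact ⟨(y, x), ⟨⟨hy, hx⟩, hk.symm, h1⟩, rfl⟩
  calc _ ≤ _ := Finset.card_le_card hsub
    _ ≤ (P.image (fun x => (x, x))).card + (U ∪ U.image Prod.swap).card :=
        Finset.card_union_le _ _
    _ ≤ P.card + (U.card + (U.image Prod.swap).card) := by
        exact Nat.add_le_add Finset.card_image_le (Finset.card_union_le _ _)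
    _ ≤ P.card + (U.card + U.card) :=
        Nat.add_le_add_left (Nat.add_le_add_left Finset.card_image_le _) _
    _ = _ := by ring

lemma lemmaG (B : ℕ) (S : Finset ℕ) (hS : S ⊆ Finset.Ico B (2*B)) :
    ((S.card:ℕ):ℝ)^3 ≤ 9 * S.card + 384 * (B:ℝ)^2 *
      ∑ z ∈ (S ×ˢ S).filter (fun z => z.1 < z.2), 1 / ((z.2 - z.1 : ℕ) : ℝ)^2 := by
  set r := S.card with hr
  have hsum : 0 ≤ ∑ z ∈ (S ×ˢ S).filter (fun z => z.1 < z.2), 1 / ((z.2 - z.1 : ℕ) : ℝ)^2 :=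
    Finset.sum_nonneg (fun _ _ => by positivity)
  rcases Nat.lt_or_ge r 4 with h4 | h4
  · have : (r:ℝ)^3 ≤ 9 * r := by
      have h3 : (r:ℝ) ≤ 3 := by exact_mod_cast (by omega : r ≤ 3)
      have h0 : (0:ℝ) ≤ r := by positivity
      nlinarith [mul_nonneg h0 (sub_nonneg.2 h3), mul_nonneg (mul_nonneg h0 h0) (sub_nonneg.2 h3)]
    have : 0 ≤ 384 * (B:ℝ)^2 * ∑ z ∈ (S ×ˢ S).filter (fun z => z.1 < z.2), 1 / ((z.2 - z.1 : ℕ) : ℝ)^2 := by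
      positivity
    linarith
  have hrB : r ≤ B := by
    have := Finset.card_le_card hS
    simp at this; omega
  have hr0 : (0:ℝ) < r := by exact_mod_cast (by omega : 0 < r)
  have hr4 : (4:ℝ) ≤ r := by exact_mod_cast h4
  have hB0 : (0:ℝ) < B := by exact_mod_cast (by omega : 0 < B)
  set L := 4 * B / r + 1 with hL
  have hL0 : 0 < L := Nat.succ_pos _
  have hL1 : (L:ℝ) ≤ 8 * B / r := by
    rw [hL]; push_cast
    have h1 : ((4 * B / r : ℕ):ℝ) ≤ 4 * B / r := by
      have := @Nat.cast_div_le ℝ _ _ _ (4*B) r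
      push_cast at this; exact this
    have h2 : (1:ℝ) ≤ 4 * B / r := by
      rw [le_div_iff₀ hr0]
      have : (r:ℝ) ≤ B := by exact_mod_cast hrB
      linarith
    have : (8:ℝ) * B / r = 4 * B / r + 4 * B / r := by ring
    linarith
  have hL2 : 4 * B < L * r := by
    rw [hL]
    have := Nat.lt_div_mul_add (a := 4*B) (b := r) (by omega)
    nlinarith
  set K := Finset.Icc (B / L) ((2*B-1)/L) with hK
  have hKmem : ∀ x ∈ S, x / L ∈ K := by
    intro x hx
    have := hS hx
    simp only [Finset.mem_Ico] at this
    simp only [hK, Finset.mem_Icc]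
    exact ⟨Nat.div_le_div_right this.1, Nat.div_le_div_right (by omega)⟩
  have hKc : 4 * K.card ≤ 3 * r := by
    have hq : (2*B-1)/L ≤ B/L + B/L + 1 := by
      rw [← Nat.lt_succ_iff, Nat.div_lt_iff_lt_mul hL0]
      have := Nat.lt_div_mul_add (a := B) hL0
      nlinarith [Nat.sub_le (2*B) 1]
    have hq2 : 4 * (B/L) < r := by
      by_contra hcon
      push Not at hcon
      have h1 := Nat.div_mul_le_self B L
      have : L * r ≤ L * (4 * (B/L)) := Nat.mul_le_mul_left _ hcon
      nlinarith
    have : K.card = (2*B-1)/L + 1 - B/L := by simp [hK]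
    omega
  set U := (S ×ˢ S).filter (fun z => z.1 / L = z.2 / L ∧ z.1 < z.2) with hU
  have h1 : r^2 ≤ K.card * (r + 2 * U.card) := by
    have e1 := eng_refine S (fun _ => (0:ℕ)) (fun x => x / L) K hKmem
    have e2 := eng_split S (fun x => ((0:ℕ), x / L)) (fun x => x) (fun x _ y _ _ h => h)
    have e3 : eng S (fun _ => (0:ℕ)) = r^2 := by
      unfold eng; simp [hr, sq]
    rw [← e3]
    refine e1.trans (Nat.mul_le_mul_left _ (e2.trans (le_of_eq ?_)))
    rw [hr]
    congr 2
    apply congrArg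
    ext z
    simp [hU]
  have h2 : r ≤ 6 * U.card := by
    have : 4 * r^2 ≤ 3 * r * (r + 2 * U.card) := by nlinarith
    have : r * (4 * r) ≤ r * (3 * (r + 2 * U.card)) := by nlinarith
    have := Nat.le_of_mul_le_mul_left this (by omega)
    omega
  have h3 : (U.card:ℝ) * ((r:ℝ)^2 / (64 * (B:ℝ)^2)) ≤
      ∑ z ∈ (S ×ˢ S).filter (fun z => z.1 < z.2), 1 / ((z.2 - z.1 : ℕ) : ℝ)^2 := by
    calc (U.card:ℝ) * ((r:ℝ)^2 / (64 * (B:ℝ)^2)) = ∑ z ∈ U, ((r:ℝ)^2 / (64 * (B:ℝ)^2)) := by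
          rw [Finset.sum_const, nsmul_eq_mul]
      _ ≤ ∑ z ∈ U, 1 / ((z.2 - z.1 : ℕ) : ℝ)^2 := by
          apply Finset.sum_le_sum
          rintro ⟨x, y⟩ hz
          simp only [hU, Finset.mem_filter] at hz
          obtain ⟨_, hq, hlt⟩ := hz
          have hd : y - x ≤ L := by
            have a1 := Nat.div_add_mod x L
            have a2 := Nat.div_add_mod y L
            have a3 := Nat.mod_lt y hL0
            rw [hq] at a1
            omega
          have hd1 : ((y - x : ℕ):ℝ) ≤ 8 * B / r := le_trans (by exact_mod_cast hd) hL1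
          have hd0 : (0:ℝ) < ((y - x : ℕ):ℝ) := by exact_mod_cast (by omega : 0 < y - x)
          have : (r:ℝ)^2 / (64 * (B:ℝ)^2) = 1 / (8 * B / r)^2 := by
            field_simp; norm_num
          rw [this]
          simp only
          gcongr
      _ ≤ _ := by
          apply Finset.sum_le_sum_of_subset_of_nonneg
          · intro z hz
            simp only [hU, Finset.mem_filter] at hz ⊢
            exact ⟨hz.1, hz.2.2⟩
          · intros; positivity
  have h2' : (r:ℝ) ≤ 6 * U.card := by exact_mod_cast h2
  have h5 : (r:ℝ)^3 ≤ 384 * (B:ℝ)^2 * ((U.card:ℝ) * ((r:ℝ)^2 / (64 * (B:ℝ)^2))) := by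
    have : 384 * (B:ℝ)^2 * ((U.card:ℝ) * ((r:ℝ)^2 / (64 * (B:ℝ)^2))) = 6 * U.card * r^2 := by
      field_simp; ring
    rw [this]
    have : (r:ℝ)^3 = r * r^2 := by ring
    rw [this]; gcongr
  have h6 := mul_le_mul_of_nonneg_left h3 (by positivity : (0:ℝ) ≤ 384 * (B:ℝ)^2)
  linarith


lemma card_le_of_diam (S : Finset ℕ) (R : ℝ) (hR : 0 ≤ R)
    (h : ∀ x ∈ S, ∀ y ∈ S, x < y → (y:ℝ) - x ≤ R) : (S.card:ℝ) ≤ 1 + R := by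
  rcases S.eq_empty_or_nonempty with h0 | h0
  · rw [h0]; simp; linarith
  have hsub : S ⊆ Finset.Icc (S.min' h0) (S.min' h0 + ⌊R⌋₊) := by
    intro y hy
    have h1 := S.min'_le y hy
    rw [Finset.mem_Icc]
    refine ⟨h1, ?_⟩
    rcases h1.eq_or_lt with h2 | h2
    · omega
    · have := h _ (S.min'_mem h0) y hy h2
      have h3 : y - S.min' h0 ≤ ⌊R⌋₊ := Nat.le_floor (by rw [Nat.cast_sub h1]; exact this)
      omega
  have h1 := Finset.card_le_card hsub
  simp only [Nat.card_Icc] at h1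
  have h2 : S.card ≤ ⌊R⌋₊ + 1 := by omega
  have h3 : (S.card:ℝ) ≤ ⌊R⌋₊ + 1 := by exact_mod_cast h2
  linarith [Nat.floor_le hR]

lemma sqrt_box {A a : ℕ} (h : a ∈ Finset.Ico A (2*A)) :
    √(A:ℝ) ≤ √(a:ℝ) ∧ √(a:ℝ) ≤ 1.5 * √(A:ℝ) ∧ √(a:ℝ) * √(a:ℝ) = a := by
  rw [Finset.mem_Ico] at h
  refine ⟨Real.sqrt_le_sqrt (by exact_mod_cast h.1), ?_, Real.mul_self_sqrt (by positivity)⟩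
  apply Real.sqrt_le_iff.2 ⟨by positivity, ?_⟩
  rw [mul_pow, Real.sq_sqrt (by positivity)]
  have : (a:ℝ) ≤ 2 * A := by exact_mod_cast h.2.le
  have : (0:ℝ) ≤ A := by positivity
  norm_num; linarith

lemma fib_real (α β α' β' s v δ : ℝ) (hs0 : 0 < s) (hδ : 0 < δ) (hv0 : 0 < v)
    (b1 : s ≤ β) (a2' : α' ≤ 1.5 * s) (b2 : β ≤ 1.5 * s) (b2' : β' ≤ 1.5 * s)
    (a1' : s ≤ α') (b1' : s ≤ β') (hαα : α ≤ α')
    (hG : (α - β) * (α + β) = (α' - β') * (α' + β'))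
    (hd : (α - β) - (α' - β') < 2 * δ) (hββ : 0 < β' - β) (hD : v / 2 ≤ α - β) :
    (β' - β) * (β' + β) ≤ 54 * δ * (s * s) / v := by
  have hid : ((α - β) - (α' - β')) * (α' + β') = (α - β) * ((α' - α) + (β' - β)) := by
    linear_combination hG
  have h1 : v / 2 * (β' - β) ≤ 2 * δ * (3 * s) := by
    calc v / 2 * (β' - β) ≤ (α - β) * ((α' - α) + (β' - β)) := by
          apply mul_le_mul hD (by linarith) hββ.le (by linarith)
      _ = ((α - β) - (α' - β')) * (α' + β') := hid.symm
      _ ≤ 2 * δ * (α' + β') := by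
          apply mul_le_mul_of_nonneg_right hd.le (by linarith)
      _ ≤ _ := by
          apply mul_le_mul_of_nonneg_left (by linarith) (by linarith)
  rw [le_div_iff₀ hv0]
  calc (β' - β) * (β' + β) * v ≤ (β' - β) * (3 * s) * v := by
        gcongr; linarith
    _ = (v / 2 * (β' - β)) * (6 * s) := by ring
    _ ≤ (2 * δ * (3 * s)) * (6 * s) := by gcongr
    _ = 36 * (δ * (s * s)) := by ring
    _ ≤ 54 * δ * (s * s) := by nlinarith [mul_pos hδ (mul_pos hs0 hs0)]

lemma lemmaP (A : ℕ) (hA : 1 ≤ A) (δ v : ℝ) (hδ : 0 < δ) (hv : 2 * δ ≤ v) :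
    ((((Finset.Ico A (2*A)) ×ˢ (Finset.Ico A (2*A))).filter
      (fun z : ℕ × ℕ => |√(z.1:ℝ) - √(z.2:ℝ) - v| < δ)).card : ℝ) ≤
      5 * v * √(A:ℝ) + 300 * δ * (A:ℝ) * √(A:ℝ) := by
  set Z := ((Finset.Ico A (2*A)) ×ˢ (Finset.Ico A (2*A))).filter
      (fun z : ℕ × ℕ => |√(z.1:ℝ) - √(z.2:ℝ) - v| < δ) with hZ
  have hA0 : (0:ℝ) < A := by exact_mod_cast hA
  set s := √(A:ℝ) with hs
  have hs0 : 0 < s := Real.sqrt_pos.2 hA0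
  have hss : s * s = A := Real.mul_self_sqrt hA0.le
  have hv0 : 0 < v := by linarith
  -- basic facts on members
  have key : ∀ z ∈ Z, z.2 < z.1 ∧ v * s ≤ (z.1:ℝ) - z.2 ∧ (z.1:ℝ) - z.2 ≤ 5 * v * s := by
    rintro ⟨a, b⟩ hz
    simp only [hZ, Finset.mem_filter, Finset.mem_product] at hz
    obtain ⟨⟨ha, hb⟩, hz⟩ := hz
    obtain ⟨a1, a2, a3⟩ := sqrt_box ha
    obtain ⟨b1, b2, b3⟩ := sqrt_box hb
    rw [abs_lt] at hz
    have hd : (a:ℝ) - b = (√(a:ℝ) - √(b:ℝ)) * (√(a:ℝ) + √(b:ℝ)) := by linear_combination b3 - a3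
    have hlo : v / 2 ≤ √(a:ℝ) - √(b:ℝ) := by linarith
    have hhi : √(a:ℝ) - √(b:ℝ) ≤ 3 * v / 2 := by linarith
    have e1 : v * s ≤ (a:ℝ) - b := by
      rw [hd]
      calc v * s = v / 2 * (2 * s) := by ring
        _ ≤ _ := by
          apply mul_le_mul hlo _ (by positivity) (by linarith)
          linarith
    have e2 : (a:ℝ) - b ≤ 5 * v * s := by
      rw [hd]
      calc _ ≤ (3 * v / 2) * (3 * s) := by
            apply mul_le_mul hhi _ (by positivity) (by linarith)
            linarith
        _ ≤ _ := by nlinarith [mul_pos hv0 hs0]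
    refine ⟨?_, e1, e2⟩
    have : (b:ℝ) < a := by nlinarith [mul_pos hv0 hs0]
    exact_mod_cast this
  have hmaps : ∀ z ∈ Z, z.1 - z.2 ∈ Finset.Icc 1 ⌊5 * v * s⌋₊ := by
    intro z hz
    obtain ⟨k1, k2, k3⟩ := key z hz
    rw [Finset.mem_Icc]
    refine ⟨by omega, Nat.le_floor ?_⟩
    rw [Nat.cast_sub k1.le]; exact k3
  have hfib : ∀ g ∈ Finset.Icc 1 ⌊5 * v * s⌋₊, ((Z.filter (fun z => z.1 - z.2 = g)).card : ℝ) ≤ 1 + 54 * δ * A / v := by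
    intro g _
    set W := Z.filter (fun z => z.1 - z.2 = g) with hW
    have hWc : W.card = (W.image Prod.snd).card := by
      rw [Finset.card_image_of_injOn]
      rintro ⟨a, b⟩ h1 ⟨a', b'⟩ h2 h3
      simp only [hW, Finset.coe_filter, Set.mem_setOf_eq] at h1 h2
      have k1 := (key _ h1.1).1
      have k2 := (key _ h2.1).1
      simp only at h3 k1 k2 h1 h2
      ext
      · simp only; omega
      · exact h3
    rw [hWc]
    apply card_le_of_diam _ _ (by positivity)
    intro x hx y hy hxy
    simp only [hW, Finset.mem_image, Finset.mem_filter] at hx hy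
    obtain ⟨⟨a, b⟩, ⟨hz1, hg1⟩, rfl⟩ := hx
    obtain ⟨⟨a', b'⟩, ⟨hz2, hg2⟩, rfl⟩ := hy
    have k1 := key _ hz1
    have k2 := key _ hz2
    simp only at *
    have hz1' := hz1
    have hz2' := hz2
    simp only [hZ, Finset.mem_filter, Finset.mem_product] at hz1' hz2'
    obtain ⟨⟨ha, hb⟩, hz1'⟩ := hz1'
    obtain ⟨⟨ha', hb'⟩, hz2'⟩ := hz2'
    obtain ⟨a1, a2, a3⟩ := sqrt_box ha
    obtain ⟨b1, b2, b3⟩ := sqrt_box hb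
    obtain ⟨a1', a2', a3'⟩ := sqrt_box ha'
    obtain ⟨b1', b2', b3'⟩ := sqrt_box hb'
    rw [← hs] at a1 a2 b1 b2 a1' a2' b1' b2'
    rw [abs_lt] at hz1' hz2'
    have haa : a < a' := by omega
    have hsum : a + b' = a' + b := by omega
    have hsumR : (a:ℝ) + b' = a' + b := by exact_mod_cast hsum
    set α := √(a:ℝ)
    set β := √(b:ℝ)
    set α' := √(a':ℝ)
    set β' := √(b':ℝ)
    have hαα : α ≤ α' := Real.sqrt_le_sqrt (by exact_mod_cast haa.le)
    have hG : (α - β) * (α + β) = (α' - β') * (α' + β') := by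
      linear_combination a3 - b3 - a3' + b3' + hsumR
    have hβ : (b':ℝ) - b = (β' - β) * (β' + β) := by linear_combination b3 - b3'
    have hββ : 0 < β' - β := by
      have : (0:ℝ) < (b':ℝ) - b := by rw [sub_pos]; exact_mod_cast hxy
      rw [hβ] at this
      exact pos_of_mul_pos_left this (by linarith)
    rw [hβ, ← hss]
    exact fib_real α β α' β' s v δ hs0 hδ hv0 b1 a2' b2 b2' a1' b1' hαα hG (by linarith) hββ (by linarith)
  have hcard : (Z.card:ℝ) = ∑ g ∈ Finset.Icc 1 ⌊5 * v * s⌋₊, ((Z.filter (fun z => z.1 - z.2 = g)).card : ℝ) := by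
    rw [Finset.card_eq_sum_card_fiberwise (f := fun z => z.1 - z.2) (t := Finset.Icc 1 ⌊5 * v * s⌋₊)]
    · push_cast; rfl
    · intro z hz; exact hmaps z hz
  rw [hcard]
  calc _ ≤ ∑ g ∈ Finset.Icc 1 ⌊5 * v * s⌋₊, (1 + 54 * δ * A / v) := Finset.sum_le_sum hfib
    _ = (⌊5 * v * s⌋₊ : ℝ) * (1 + 54 * δ * A / v) := by
        rw [Finset.sum_const, nsmul_eq_mul]; simp
    _ ≤ (5 * v * s) * (1 + 54 * δ * A / v) := by
        gcongr; exact Nat.floor_le (by positivity)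
    _ = 5 * v * s + 270 * δ * A * s := by field_simp; ring
    _ ≤ _ := by nlinarith [mul_pos (mul_pos hδ hA0) hs0]


def bin (δ : ℝ) (x : ℕ × ℕ) : ℤ := ⌊(√(x.1:ℝ) + √(x.2:ℝ)) / δ⌋

def dbox (A B : ℕ) : Finset (ℕ × ℕ) := Finset.Ico A (2*A) ×ˢ Finset.Ico B (2*B)

def Fh (A B : ℕ) (δ : ℝ) (h : ℕ) : ℕ :=
  (((dbox A B) ×ˢ (dbox A B)).filter (fun z => bin δ z.1 = bin δ z.2 ∧ z.2.2 = z.1.2 + h)).card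

lemma bin_close {δ : ℝ} (hδ : 0 < δ) {x y : ℕ × ℕ} (h : bin δ x = bin δ y) :
    |(√(x.1:ℝ) + √(x.2:ℝ)) - (√(y.1:ℝ) + √(y.2:ℝ))| < δ := by
  have := Int.abs_sub_lt_one_of_floor_eq_floor h
  rw [← sub_div, abs_div, abs_of_pos hδ, div_lt_one hδ] at this
  exact this

lemma sqrt_gap {B b c : ℕ} (hb : b ∈ Finset.Ico B (2*B)) (hc : c ∈ Finset.Ico B (2*B)) (hbc : b < c)
    {δ : ℝ} (hδB : 8 * δ * √(B:ℝ) ≤ 1) :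
    2 * δ ≤ √(c:ℝ) - √(b:ℝ) ∧ √(c:ℝ) - √(b:ℝ) ≤ (c - b : ℝ) / (2 * √(B:ℝ)) := by
  obtain ⟨b1, b2, b3⟩ := sqrt_box hb
  obtain ⟨c1, c2, c3⟩ := sqrt_box hc
  have hB : 0 < B := by simp at hb; omega
  have hs : 0 < √(B:ℝ) := Real.sqrt_pos.2 (by exact_mod_cast hB)
  have hd : (c:ℝ) - b = (√(c:ℝ) - √(b:ℝ)) * (√(c:ℝ) + √(b:ℝ)) := by linear_combination b3 - c3
  have h1 : (1:ℝ) ≤ (c:ℝ) - b := by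
    have : (b:ℝ) + 1 ≤ c := by exact_mod_cast hbc
    linarith
  set s := √(B:ℝ)
  set u := √(b:ℝ)
  set w := √(c:ℝ)
  have hw : 0 < w - u := by
    have : 0 < (w - u) * (w + u) := by linarith
    exact pos_of_mul_pos_left this (by linarith)
  constructor
  · have h3 : 1 ≤ (w - u) * (3 * s) := by
      calc 1 ≤ (w - u) * (w + u) := by linarith
        _ ≤ _ := by gcongr; linarith
    have : 2 * δ * s < (w - u) * s := by nlinarith
    exact (lt_of_mul_lt_mul_right this hs.le).le
  · rw [le_div_iff₀ (by positivity), hd]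
    gcongr; linarith

lemma Fh_le (A B : ℕ) (hA : 1 ≤ A) (hB : 1 ≤ B) (δ : ℝ) (hδ : 0 < δ) (hδB : 8 * δ * √(B:ℝ) ≤ 1)
    (h : ℕ) (hh : 1 ≤ h) :
    (Fh A B δ h : ℝ) ≤ 5 / 2 * h * √(A:ℝ) * √(B:ℝ) + 300 * δ * A * √(A:ℝ) * B := by
  have hB0 : (0:ℝ) < B := by exact_mod_cast hB
  have hsB : 0 < √(B:ℝ) := Real.sqrt_pos.2 hB0
  unfold Fh
  set Z := ((dbox A B) ×ˢ (dbox A B)).filter (fun z => bin δ z.1 = bin δ z.2 ∧ z.2.2 = z.1.2 + h) with hZ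
  have hmem : ∀ z ∈ Z, (z.1.1 ∈ Finset.Ico A (2*A) ∧ z.1.2 ∈ Finset.Ico B (2*B)) ∧
      (z.2.1 ∈ Finset.Ico A (2*A) ∧ z.2.2 ∈ Finset.Ico B (2*B)) ∧ bin δ z.1 = bin δ z.2 ∧
      z.2.2 = z.1.2 + h := by
    intro z hz
    simp only [hZ, dbox, Finset.mem_filter, Finset.mem_product] at hz
    exact ⟨hz.1.1, hz.1.2, hz.2⟩
  have hcard : (Z.card:ℝ) = ∑ b ∈ Finset.Ico B (2*B), ((Z.filter (fun z => z.1.2 = b)).card : ℝ) := by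
    rw [Finset.card_eq_sum_card_fiberwise (f := fun z => z.1.2) (t := Finset.Ico B (2*B))]
    · push_cast; rfl
    · intro z hz; exact (hmem z hz).1.2
  have hfib : ∀ b ∈ Finset.Ico B (2*B), ((Z.filter (fun z => z.1.2 = b)).card : ℝ) ≤
      5 * (h / (2 * √(B:ℝ))) * √(A:ℝ) + 300 * δ * A * √(A:ℝ) := by
    intro b hb
    rcases (Z.filter (fun z => z.1.2 = b)).eq_empty_or_nonempty with h0 | ⟨z0, hz0⟩
    · rw [h0]; simp; positivity
    have hbh : b + h ∈ Finset.Ico B (2*B) := by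
      simp only [Finset.mem_filter] at hz0
      have := hmem _ hz0.1
      rw [← hz0.2, ← this.2.2.2]; exact this.2.1.2
    obtain ⟨g1, g2⟩ := sqrt_gap hb hbh (by omega) hδB
    set v := √((b + h : ℕ):ℝ) - √(b:ℝ) with hv
    have hinj : (Z.filter (fun z => z.1.2 = b)).card ≤ (((Finset.Ico A (2*A)) ×ˢ (Finset.Ico A (2*A))).filter
      (fun z : ℕ × ℕ => |√(z.1:ℝ) - √(z.2:ℝ) - v| < δ)).card := by
      apply Finset.card_le_card_of_injOn (fun z => (z.1.1, z.2.1))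
      · intro z hz
        simp only [Finset.coe_filter, Set.mem_setOf_eq] at hz
        obtain ⟨hz, hzb⟩ := hz
        obtain ⟨m1, m2, m3, m4⟩ := hmem z hz
        simp only [Finset.coe_filter, Set.mem_setOf_eq, Finset.mem_product]
        refine ⟨⟨m1.1, m2.1⟩, ?_⟩
        have := bin_close hδ m3
        rw [m4, hzb] at this
        rw [hv]
        convert this using 2
        ring
      · rintro ⟨⟨a, b1⟩, ⟨c, d⟩⟩ hz ⟨⟨a', b1'⟩, ⟨c', d'⟩⟩ hz' he
        simp only [Finset.coe_filter, Set.mem_setOf_eq] at hz hz'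
        have q1 := (hmem _ hz.1).2.2.2
        have q2 := (hmem _ hz'.1).2.2.2
        simp only [Prod.mk.injEq] at he q1 q2 hz hz' ⊢
        omega
    have := lemmaP A hA δ v hδ g1
    have hv2 : v ≤ h / (2 * √(B:ℝ)) := by
      have : ((b + h : ℕ):ℝ) - b = h := by push_cast; ring
      rw [this] at g2; exact g2
    calc _ ≤ _ := by exact_mod_cast hinj
      _ ≤ _ := this
      _ ≤ _ := by gcongr
  rw [hcard]
  calc _ ≤ ∑ b ∈ Finset.Ico B (2*B), (5 * (h / (2 * √(B:ℝ))) * √(A:ℝ) + 300 * δ * A * √(A:ℝ)) :=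
        Finset.sum_le_sum hfib
    _ = B * (5 * (h / (2 * √(B:ℝ))) * √(A:ℝ) + 300 * δ * A * √(A:ℝ)) := by
        rw [Finset.sum_const, nsmul_eq_mul]; congr 2; simp; omega
    _ = _ := by
        have : (B:ℝ) = √(B:ℝ) * √(B:ℝ) := (Real.mul_self_sqrt hB0.le).symm
        have e : (B:ℝ) * (5 * (h / (2 * √(B:ℝ))) * √(A:ℝ)) = 5 / 2 * h * √(A:ℝ) * √(B:ℝ) := by
          nth_rewrite 1 [this]; field_simp
        rw [mul_add, e]; ring

lemma dbox_card (A B : ℕ) : (dbox A B).card = A * B := by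
  unfold dbox; rw [Finset.card_product]; simp
  congr 1 <;> omega

lemma bin_inj {A B : ℕ} {δ : ℝ} (hδ : 0 < δ) (hδA : 8 * δ * √(A:ℝ) ≤ 1)
    (x : ℕ × ℕ) (hx : x ∈ dbox A B) (y : ℕ × ℕ) (hy : y ∈ dbox A B) (h : bin δ x = bin δ y)
    (h2 : x.2 = y.2) : x = y := by
  unfold dbox at hx hy
  rw [Finset.mem_product] at hx hy
  have h1 := bin_close hδ h
  rw [h2] at h1
  have h3 : |√(x.1:ℝ) - √(y.1:ℝ)| < δ := by
    convert h1 using 2; ring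
  rw [abs_lt] at h3
  ext
  · by_contra hne
    rcases lt_or_gt_of_ne hne with h4 | h4
    · have := (sqrt_gap hx.1 hy.1 h4 hδA).1; linarith
    · have := (sqrt_gap hy.1 hx.1 h4 hδA).1; linarith
  · exact h2


lemma sqrt_mul_le (A B : ℕ) (hBA : B ≤ A) : √(A:ℝ) * √(B:ℝ) ≤ A ∧ (B:ℝ) ≤ √(A:ℝ) * √(B:ℝ) := by
  have h : √(B:ℝ) ≤ √(A:ℝ) := Real.sqrt_le_sqrt (by exact_mod_cast hBA)
  have hA : √(A:ℝ) * √(A:ℝ) = A := Real.mul_self_sqrt (by positivity)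
  have hB : √(B:ℝ) * √(B:ℝ) = B := Real.mul_self_sqrt (by positivity)
  constructor
  · nlinarith [Real.sqrt_nonneg (A:ℝ)]
  · nlinarith [Real.sqrt_nonneg (B:ℝ)]

lemma energy_le (A B : ℕ) (hB : 1 ≤ B) (hBA : B ≤ A) (δ : ℝ) (hδ : 0 < δ) (hδA : 8 * δ * √(A:ℝ) ≤ 1) :
    (eng (dbox A B) (bin δ) : ℝ) ≤ 30 * (A * (B * √(B:ℝ))) + 3000 * δ * (A * √(A:ℝ)) * (B:ℝ)^2 := by
  have hA : 1 ≤ A := hB.trans hBA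
  have hδB : 8 * δ * √(B:ℝ) ≤ 1 := by
    refine le_trans ?_ hδA
    have : √(B:ℝ) ≤ √(A:ℝ) := Real.sqrt_le_sqrt (by exact_mod_cast hBA)
    gcongr
  set L := Nat.sqrt B with hL
  have hL1 : 1 ≤ L := by rw [hL, Nat.le_sqrt]; omega
  have hL2 : L * L ≤ B := Nat.sqrt_le B
  have hL3 : B ≤ L * L + L + L := Nat.sqrt_le_add B
  set S := Finset.Icc (B / L) ((2*B-1)/L) with hS
  have hScard : S.card ≤ 5 * L := by
    have h1 : S.card = (2*B-1)/L + 1 - B/L := by simp [hS]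
    have h2 : (2*B-1)/L ≤ B/L + B/L + 1 := by
      rw [← Nat.lt_succ_iff, Nat.div_lt_iff_lt_mul (by omega)]
      have := Nat.lt_div_mul_add (a := B) (b := L) (by omega)
      nlinarith [Nat.sub_le (2*B) 1]
    have h3 : B / L ≤ L + 2 := by
      apply Nat.div_le_of_le_mul; nlinarith
    omega
  have hSmem : ∀ x ∈ dbox A B, x.2 / L ∈ S := by
    intro x hx
    simp only [dbox, Finset.mem_product, Finset.mem_Ico] at hx
    simp only [hS, Finset.mem_Icc]
    exact ⟨Nat.div_le_div_right hx.2.1, Nat.div_le_div_right (by omega)⟩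
  have e1 := eng_refine (dbox A B) (bin δ) (fun x => x.2 / L) S hSmem
  have e2 := eng_split (dbox A B) (fun x => (bin δ x, x.2 / L)) (fun x => x.2)
    (fun x hx y hy h1 h2 => bin_inj hδ hδA x hx y hy (by simpa using (congrArg Prod.fst h1)) h2)
  have e3 : ((((dbox A B) ×ˢ (dbox A B)).filter (fun z => (bin δ z.1, z.1.2 / L) = (bin δ z.2, z.2.2 / L)
      ∧ z.1.2 < z.2.2)).card) ≤ ∑ h ∈ Finset.Icc 1 L, Fh A B δ h := by
    rw [Finset.card_eq_sum_card_fiberwise (f := fun z => z.2.2 - z.1.2) (t := Finset.Icc 1 L)]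
    · apply Finset.sum_le_sum
      intro h _
      unfold Fh
      apply Finset.card_le_card
      intro z hz
      simp only [Finset.mem_filter, Prod.mk.injEq] at hz ⊢
      exact ⟨hz.1.1, hz.1.2.1.1, by omega⟩
    · intro z hz
      simp only [Finset.coe_filter, Set.mem_setOf_eq, Prod.mk.injEq] at hz
      obtain ⟨_, ⟨_, hq⟩, hlt⟩ := hz
      have a1 := Nat.div_add_mod z.1.2 L
      have a2 := Nat.div_add_mod z.2.2 L
      have a3 := Nat.mod_lt z.2.2 (show L > 0 by omega)
      rw [hq] at a1
      simp only [Finset.coe_Icc, Set.mem_Icc]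
      omega
  have e4 : eng (dbox A B) (bin δ) ≤ 5 * L * (A * B + 2 * ∑ h ∈ Finset.Icc 1 L, Fh A B δ h) := by
    calc _ ≤ _ := e1
      _ ≤ 5 * L * eng (dbox A B) (fun x => (bin δ x, x.2 / L)) := Nat.mul_le_mul_right _ hScard
      _ ≤ _ := by
        apply Nat.mul_le_mul_left
        rw [← dbox_card]
        refine e2.trans (Nat.add_le_add_left (Nat.mul_le_mul_left _ ?_) _)
        exact (le_of_eq (by congr)).trans e3
  have hA0 : (0:ℝ) < A := by exact_mod_cast hA
  have hB0 : (0:ℝ) < B := by exact_mod_cast hB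
  obtain ⟨m1, m2⟩ := sqrt_mul_le A B hBA
  set a := √(A:ℝ) with ha
  set b := √(B:ℝ) with hb
  have ha0 : 0 ≤ a := Real.sqrt_nonneg _
  have hb0 : 0 ≤ b := Real.sqrt_nonneg _
  have hbb : b * b = B := Real.mul_self_sqrt hB0.le
  have hLb : (L:ℝ) ≤ b := by
    rw [hb]; apply Real.le_sqrt_of_sq_le; rw [sq]; exact_mod_cast hL2
  have e5 : ∑ h ∈ Finset.Icc 1 L, (Fh A B δ h : ℝ) ≤ b * (5/2 * b * a * b + 300 * δ * A * a * B) := by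
    calc _ ≤ ∑ h ∈ Finset.Icc 1 L, (5/2 * b * a * b + 300 * δ * A * a * B) := by
          apply Finset.sum_le_sum
          intro h hh
          rw [Finset.mem_Icc] at hh
          have h1 : (h:ℝ) ≤ b := le_trans (by exact_mod_cast hh.2) hLb
          refine (Fh_le A B hA hB δ hδ hδB h hh.1).trans ?_
          gcongr
      _ = L * (5/2 * b * a * b + 300 * δ * A * a * B) := by
          rw [Finset.sum_const, nsmul_eq_mul]; simp
      _ ≤ _ := by gcongr
  have e6 : (eng (dbox A B) (bin δ) : ℝ) ≤ 5 * L * (A * B + 2 * ∑ h ∈ Finset.Icc 1 L, (Fh A B δ h : ℝ)) := by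
    exact_mod_cast e4
  calc _ ≤ _ := e6
    _ ≤ 5 * b * (A * B + 2 * (b * (5/2 * b * a * b + 300 * δ * A * a * B))) := by gcongr
    _ = 5 * b * (A * B) + 25 * (b * (b * b)) * (a * b) + 3000 * δ * A * a * B * (b * b) := by ring
    _ ≤ 5 * b * (A * B) + 25 * (b * (b * b)) * A + 3000 * δ * A * a * B * (b * b) := by gcongr
    _ = _ := by rw [hbb]; ring

lemma third_le_sum (A B : ℕ) (δ : ℝ) (hδ : 0 < δ) (hδA : 8 * δ * √(A:ℝ) ≤ 1) :
    (third (dbox A B) (bin δ) : ℝ) ≤ 9 * (A * B) + 384 * (B:ℝ)^2 *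
      ∑ h ∈ Finset.Icc 1 B, (Fh A B δ h : ℝ) / (h:ℝ)^2 := by
  set P := dbox A B with hP
  set D := P.image (bin δ) with hD
  set S : ℤ → Finset ℕ := fun d => (P.filter (fun x => bin δ x = d)).image Prod.snd with hS
  have hSc : ∀ d, (S d).card = rep P (bin δ) d := by
    intro d
    unfold rep
    rw [hS]
    rw [Finset.card_image_of_injOn]
    · congr
    intro x hx y hy hxy
    simp only [Finset.coe_filter, Set.mem_setOf_eq] at hx hy
    exact bin_inj hδ hδA x hx.1 y hy.1 (hx.2.trans hy.2.symm) hxy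
  have hSsub : ∀ d, S d ⊆ Finset.Ico B (2*B) := by
    intro d b hb
    simp only [hS, Finset.mem_image, Finset.mem_filter, hP, dbox, Finset.mem_product] at hb
    obtain ⟨x, hx, rfl⟩ := hb
    exact hx.1.2
  have h1 : ∀ d, ∑ z ∈ ((S d) ×ˢ (S d)).filter (fun z => z.1 < z.2), 1 / ((z.2 - z.1 : ℕ) : ℝ)^2
      = ∑ h ∈ Finset.Icc 1 B, ((((S d) ×ˢ (S d)).filter (fun z => z.2 = z.1 + h)).card : ℝ) / (h:ℝ)^2 := by
    intro d
    rw [← Finset.sum_fiberwise_of_maps_to (g := fun z : ℕ × ℕ => z.2 - z.1) (t := Finset.Icc 1 B)]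
    · apply Finset.sum_congr rfl
      intro h hh
      rw [Finset.mem_Icc] at hh
      rw [Finset.filter_filter]
      have : ((S d) ×ˢ (S d)).filter (fun z => z.1 < z.2 ∧ z.2 - z.1 = h) =
          ((S d) ×ˢ (S d)).filter (fun z => z.2 = z.1 + h) := by
        apply Finset.filter_congr
        intro z _
        omega
      rw [this, div_eq_mul_one_div, ← nsmul_eq_mul, ← Finset.sum_const]
      apply Finset.sum_congr rfl
      intro z hz
      rw [Finset.mem_filter] at hz
      have : z.2 - z.1 = h := by omega
      rw [this]
    · intro z hz
      simp only [Finset.mem_filter, Finset.mem_product] at hz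
      have a1 := hSsub d hz.1.1
      have a2 := hSsub d hz.1.2
      rw [Finset.mem_Ico] at a1 a2
      rw [Finset.mem_Icc]; omega
  have h2 : ∀ h, ∑ d ∈ D, (((S d) ×ˢ (S d)).filter (fun z => z.2 = z.1 + h)).card ≤ Fh A B δ h := by
    intro h
    unfold Fh
    rw [Finset.card_eq_sum_card_fiberwise (f := fun z => bin δ z.1) (t := D)]
    · apply Finset.sum_le_sum
      intro d _
      refine le_trans (Finset.card_le_card ?_) (Finset.card_image_le (f := fun z : (ℕ × ℕ) × (ℕ × ℕ) => (z.1.2, z.2.2)))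
      rintro ⟨b, c⟩ hz
      simp only [hS, Finset.mem_filter, Finset.mem_product, Finset.mem_image] at hz ⊢
      obtain ⟨⟨⟨x, hx, hxb⟩, ⟨y, hy, hyc⟩⟩, hbc⟩ := hz
      refine ⟨(x, y), ⟨⟨⟨hx.1, hy.1⟩, hx.2.trans hy.2.symm, ?_⟩, hx.2⟩, ?_⟩
      · rw [hxb, hyc]; exact hbc
      · simp [hxb, hyc]
    · intro z hz
      simp only [Finset.coe_filter, Set.mem_setOf_eq, Finset.mem_product] at hz
      exact Finset.mem_coe.2 (Finset.mem_image_of_mem _ hz.1.1)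
  have h3 : (third P (bin δ) : ℝ) = ∑ d ∈ D, ((S d).card : ℝ)^3 := by
    unfold third
    push_cast
    apply Finset.sum_congr rfl
    intro d _
    rw [hSc]
  rw [h3]
  calc _ ≤ ∑ d ∈ D, (9 * ((S d).card:ℝ) + 384 * (B:ℝ)^2 *
      ∑ h ∈ Finset.Icc 1 B, ((((S d) ×ˢ (S d)).filter (fun z => z.2 = z.1 + h)).card : ℝ) / (h:ℝ)^2) := by
        apply Finset.sum_le_sum
        intro d _
        rw [← h1]
        exact lemmaG B (S d) (hSsub d)
    _ = 9 * (∑ d ∈ D, ((S d).card:ℝ)) + 384 * (B:ℝ)^2 * ∑ h ∈ Finset.Icc 1 B,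
        (∑ d ∈ D, ((((S d) ×ˢ (S d)).filter (fun z => z.2 = z.1 + h)).card : ℝ)) / (h:ℝ)^2 := by
        rw [Finset.sum_add_distrib, ← Finset.mul_sum, ← Finset.mul_sum, Finset.sum_comm]
        congr 2
        apply Finset.sum_congr rfl
        intro h _
        rw [Finset.sum_div]
    _ ≤ _ := by
        gcongr with h _
        · have := sum_rep_le P (bin δ) D
          rw [hP, dbox_card] at this
          simp only [hSc]
          exact_mod_cast this
        · exact_mod_cast h2 h

lemma third_le (A B : ℕ) (hB : 1 ≤ B) (hBA : B ≤ A) (δ : ℝ) (hδ : 0 < δ) (hδA : 8 * δ * √(A:ℝ) ≤ 1)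
    (hδA' : δ * (A * √(A:ℝ)) ≤ 1) :
    (third (dbox A B) (bin δ) : ℝ) ≤ 9 * (A * B) + 120000 * (√(A:ℝ) * ((B:ℝ)^2 * √(B:ℝ))) * (1 + Real.log B) := by
  have hA : 1 ≤ A := hB.trans hBA
  have hδB : 8 * δ * √(B:ℝ) ≤ 1 := by
    refine le_trans ?_ hδA
    have : √(B:ℝ) ≤ √(A:ℝ) := Real.sqrt_le_sqrt (by exact_mod_cast hBA)
    gcongr
  refine (third_le_sum A B δ hδ hδA).trans ?_
  obtain ⟨m1, m2⟩ := sqrt_mul_le A B hBA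
  have hB0 : (0:ℝ) < B := by exact_mod_cast hB
  have hterm : ∀ h ∈ Finset.Icc 1 B, (Fh A B δ h : ℝ) / (h:ℝ)^2 ≤ 303 * (√(A:ℝ) * √(B:ℝ)) * (h:ℝ)⁻¹ := by
    intro h hh
    rw [Finset.mem_Icc] at hh
    have hh0 : (1:ℝ) ≤ h := by exact_mod_cast hh.1
    have h1 := Fh_le A B hA hB δ hδ hδB h hh.1
    rw [div_le_iff₀ (by positivity)]
    have e : 303 * (√(A:ℝ) * √(B:ℝ)) * (h:ℝ)⁻¹ * (h:ℝ)^2 = 303 * (√(A:ℝ) * √(B:ℝ)) * h := by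
      field_simp
    rw [e]
    have h2 : 300 * δ * A * √(A:ℝ) * B ≤ 300 * (√(A:ℝ) * √(B:ℝ)) := by
      calc _ = 300 * (δ * (A * √(A:ℝ))) * B := by ring
        _ ≤ 300 * 1 * B := by gcongr
        _ ≤ _ := by linarith
    have h3 : 0 ≤ √(A:ℝ) * √(B:ℝ) := by positivity
    nlinarith
  have hH : ∑ h ∈ Finset.Icc 1 B, (h:ℝ)⁻¹ ≤ 1 + Real.log B := by
    have := harmonic_le_one_add_log B
    rw [harmonic_eq_sum_Icc] at this
    push_cast at this
    exact this
  have : ∑ h ∈ Finset.Icc 1 B, (Fh A B δ h : ℝ) / (h:ℝ)^2 ≤ 303 * (√(A:ℝ) * √(B:ℝ)) * (1 + Real.log B) := by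
    refine (Finset.sum_le_sum hterm).trans ?_
    rw [← Finset.mul_sum]
    gcongr
  have hl : 0 ≤ Real.log B := Real.log_natCast_nonneg B
  calc _ ≤ 9 * ((A:ℝ) * B) + 384 * (B:ℝ)^2 * (303 * (√(A:ℝ) * √(B:ℝ)) * (1 + Real.log B)) := by gcongr
    _ = 9 * ((A:ℝ) * B) + 116352 * (√(A:ℝ) * ((B:ℝ)^2 * √(B:ℝ))) * (1 + Real.log B) := by ring
    _ ≤ _ := by gcongr; norm_num


lemma card_congr_interval (a : ℤ) (e m : ℕ) (hm : 0 < m) (W : Finset ℤ)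
    (hW : ∀ t ∈ W, a ≤ t ∧ t < a + (e * m : ℕ)) (hc : ∀ t ∈ W, ∀ t' ∈ W, (m:ℤ) ∣ t - t') :
    W.card ≤ e := by
  have hm' : (0:ℤ) < m := by exact_mod_cast hm
  have : W.card ≤ (Finset.Ico (0:ℤ) e).card := by
    apply Finset.card_le_card_of_injOn (fun t => (t - a) / m)
    · intro t ht
      obtain ⟨h1, h2⟩ := hW t ht
      simp only [Finset.coe_Ico, Set.mem_Ico]
      push_cast at h2
      constructor
      · exact Int.ediv_nonneg (by linarith) hm'.le
      · rw [Int.ediv_lt_iff_lt_mul hm']; linarith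
    · intro t ht t' ht' h
      simp only at h
      have hd := hc t ht t' ht'
      have h3 : (t - a) % m = (t' - a) % m := by
        apply Int.emod_emod_of_dvd _ (dvd_refl _) |>.symm.trans
        rw [Int.emod_emod_of_dvd _ (dvd_refl _)]
        apply Int.ModEq.symm
        rw [Int.modEq_iff_dvd]
        convert hd using 1; ring
      have e1 := Int.mul_ediv_add_emod (t - a) m
      have e2 := Int.mul_ediv_add_emod (t' - a) m
      rw [h, h3] at e1
      linarith
  simpa using this

lemma card_multiples (R e : ℕ) (he : 0 < e) :
    e * ((Finset.Icc (-(R:ℤ)) R).filter (fun r => r ≠ 0 ∧ ((e^2 : ℕ):ℤ) ∣ 4 * r)).card ≤ 8 * R := by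
  set K := 4 * R / e^2 with hK
  have he2 : (0:ℤ) < ((e^2:ℕ):ℤ) := by exact_mod_cast (by positivity : 0 < e^2)
  have h1 : ((Finset.Icc (-(R:ℤ)) R).filter (fun r => r ≠ 0 ∧ ((e^2 : ℕ):ℤ) ∣ 4 * r)).card ≤
      ((Finset.Icc (-(K:ℤ)) K).erase 0).card := by
    apply Finset.card_le_card_of_injOn (fun r => 4 * r / ((e^2:ℕ):ℤ))
    · intro r hr
      simp only [Finset.coe_filter, Set.mem_setOf_eq, Finset.mem_Icc] at hr
      obtain ⟨⟨h1, h2⟩, h3, k, hk⟩ := hr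
      simp only [Finset.coe_erase, Finset.coe_Icc, Set.mem_diff, Set.mem_Icc, Set.mem_singleton_iff]
      rw [hk, Int.mul_ediv_cancel_left _ he2.ne']
      have hk1 : k ≤ K := by
        rw [hK]; push_cast
        rw [Int.le_ediv_iff_mul_le (by exact_mod_cast he2)]
        push_cast at hk; nlinarith
      have hk2 : -k ≤ K := by
        rw [hK]; push_cast
        rw [Int.le_ediv_iff_mul_le (by exact_mod_cast he2)]
        push_cast at hk; nlinarith
      refine ⟨⟨by linarith, hk1⟩, ?_⟩
      rintro rfl
      apply h3; linarith
    · intro r hr r' hr' h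
      simp only [Finset.coe_filter, Set.mem_setOf_eq, Finset.mem_Icc] at hr hr'
      obtain ⟨_, _, k, hk⟩ := hr
      obtain ⟨_, _, k', hk'⟩ := hr'
      simp only at h
      rw [hk, hk', Int.mul_ediv_cancel_left _ he2.ne', Int.mul_ediv_cancel_left _ he2.ne'] at h
      rw [h] at hk; linarith
  have h2 : ((Finset.Icc (-(K:ℤ)) K).erase 0).card = 2 * K := by
    rw [Finset.card_erase_of_mem (by simp)]
    simp; omega
  rw [h2] at h1
  have h3 : K * e^2 ≤ 4 * R := Nat.div_mul_le_self _ _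
  calc _ ≤ e * (2 * K) := Nat.mul_le_mul_left _ h1
    _ ≤ 2 * (K * e^2) := by nlinarith [Nat.mul_le_mul_left K (Nat.le_self_pow (n := 2) (by norm_num) e)]
    _ ≤ _ := by linarith

lemma dvd_of_dvd_eq {a b c : ℤ} (h : a ∣ b) (e : c = b) : a ∣ c := e ▸ h

lemma lemmaS (q : ℕ) (hq : 1 ≤ q) (a : ℤ) (R : ℕ) :
    ((Finset.Ico a (a+q) ×ˢ Finset.Icc (-(R:ℤ)) R).filter
      (fun z => z.2 ≠ 0 ∧ (q:ℤ) ∣ z.1^2 - z.2)).card ≤ 8 * R * q.divisors.card := by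
  set Rs := (Finset.Icc (-(R:ℤ)) R).filter (fun r => r ≠ 0) with hRs
  -- per r bound
  have hr : ∀ r ∈ Rs, ((Finset.Ico a (a+q)).filter (fun t => (q:ℤ) ∣ t^2 - r)).card ≤
      ∑ g ∈ q.divisors, if (((Nat.gcd g (q/g))^2 : ℕ):ℤ) ∣ 4 * r then Nat.gcd g (q/g) else 0 := by
    intro r _
    set W := (Finset.Ico a (a+q)).filter (fun t => (q:ℤ) ∣ t^2 - r) with hW
    rcases W.eq_empty_or_nonempty with h0 | ⟨t0, ht0⟩
    · rw [h0]; simp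
    have ht0' : (q:ℤ) ∣ t0^2 - r := by
      rw [hW, Finset.mem_filter] at ht0; exact ht0.2
    have hcov : W ⊆ q.divisors.biUnion (fun g => W.filter (fun t => (g:ℤ) ∣ t - t0 ∧ ((q/g:ℕ):ℤ) ∣ t + t0)) := by
      intro t ht
      have ht' : (q:ℤ) ∣ t^2 - r := by
        rw [hW, Finset.mem_filter] at ht; exact ht.2
      have : (q:ℤ) ∣ (t - t0) * (t + t0) := by
        have := dvd_sub ht' ht0'
        exact dvd_of_dvd_eq this (by ring)
      obtain ⟨d1, d2, h1, h2, h3⟩ := exists_dvd_and_dvd_of_dvd_mul this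
      have hq1 : q = d1.natAbs * d2.natAbs := by
        rw [← Int.natAbs_mul, ← h3]; simp
      have hd1 : 0 < d1.natAbs := Nat.pos_of_ne_zero (by rintro h; rw [h] at hq1; omega)
      simp only [Finset.mem_biUnion, Finset.mem_filter, Nat.mem_divisors]
      refine ⟨d1.natAbs, ⟨⟨_, hq1⟩, by omega⟩, ht, ?_, ?_⟩
      · exact Int.natAbs_dvd.2 h1
      · rw [hq1, Nat.mul_div_cancel_left _ hd1]
        exact Int.natAbs_dvd.2 h2
    refine (Finset.card_le_card hcov).trans (Finset.card_biUnion_le.trans (Finset.sum_le_sum ?_))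
    intro g hg
    have hgq : g ∣ q := Nat.dvd_of_mem_divisors hg
    have hg0 : 0 < g := Nat.pos_of_dvd_of_pos hgq (by omega)
    obtain ⟨g', hg'⟩ := hgq
    have hqg : q / g = g' := by rw [hg', Nat.mul_div_cancel_left _ hg0]
    have hg'0 : 0 < g' := Nat.pos_of_ne_zero (by rintro rfl; omega)
    rw [hqg]
    set e := Nat.gcd g g' with he
    have he0 : 0 < e := Nat.gcd_pos_of_pos_left _ hg0
    set W' := W.filter (fun t => (g:ℤ) ∣ t - t0 ∧ (g':ℤ) ∣ t + t0) with hW'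
    rcases W'.eq_empty_or_nonempty with h0 | ⟨t1, ht1⟩
    · rw [h0]; simp
    rw [hW', Finset.mem_filter] at ht1
    have heg : (e:ℤ) ∣ g := by exact_mod_cast Nat.gcd_dvd_left g g'
    have heg' : (e:ℤ) ∣ g' := by exact_mod_cast Nat.gcd_dvd_right g g'
    have hediv : ((e^2:ℕ):ℤ) ∣ 4 * r := by
      have h1 : (e:ℤ) ∣ 2 * t0 := by
        have := dvd_sub (heg'.trans ht1.2.2) (heg.trans ht1.2.1)
        exact dvd_of_dvd_eq this (by ring)
      have h2 : (e:ℤ)^2 ∣ 4 * t0^2 := by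
        have := pow_dvd_pow_of_dvd h1 2
        exact dvd_of_dvd_eq this (by ring)
      have h3 : (e:ℤ)^2 ∣ q := by
        rw [hg', sq]; push_cast; exact mul_dvd_mul heg heg'
      have h4 := dvd_sub h2 (((h3.trans ht0')).mul_left 4)
      push_cast
      exact dvd_of_dvd_eq h4 (by ring)
    rw [if_pos hediv]
    have hlcm : e * Nat.lcm g g' = q := by rw [he, Nat.gcd_mul_lcm, hg']
    apply card_congr_interval a e (Nat.lcm g g') (Nat.lcm_pos hg0 hg'0)
    · intro t ht
      rw [hW', Finset.mem_filter, hW, Finset.mem_filter, Finset.mem_Ico] at ht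
      rw [hlcm]; exact ht.1.1
    · intro t ht t' ht'
      rw [hW', Finset.mem_filter] at ht ht'
      have e1 : (g:ℤ) ∣ t - t' := by
        have := dvd_sub ht.2.1 ht'.2.1
        exact dvd_of_dvd_eq this (by ring)
      have e2 : (g':ℤ) ∣ t - t' := by
        have := dvd_sub ht.2.2 ht'.2.2
        exact dvd_of_dvd_eq this (by ring)
      rw [← Int.dvd_natAbs] at e1 e2 ⊢
      exact_mod_cast Nat.lcm_dvd (by exact_mod_cast e1) (by exact_mod_cast e2)
  have hcard : ((Finset.Ico a (a+q) ×ˢ Finset.Icc (-(R:ℤ)) R).filter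
      (fun z => z.2 ≠ 0 ∧ (q:ℤ) ∣ z.1^2 - z.2)).card ≤
      ∑ r ∈ Rs, ((Finset.Ico a (a+q)).filter (fun t => (q:ℤ) ∣ t^2 - r)).card := by
    rw [Finset.card_eq_sum_card_fiberwise (f := fun z => z.2) (t := Rs)]
    · apply Finset.sum_le_sum
      intro r _
      apply Finset.card_le_card_of_injOn (fun z => z.1)
      · intro z hz
        simp only [Finset.coe_filter, Set.mem_setOf_eq, Finset.mem_filter, Finset.mem_product] at hz ⊢
        refine ⟨hz.1.1.1, ?_⟩
        rw [← hz.2]; exact hz.1.2.2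
      · intro z hz z' hz' h
        simp only [Finset.coe_filter, Set.mem_setOf_eq] at hz hz'
        ext
        · exact h
        · rw [hz.2, hz'.2]
    · intro z hz
      simp only [Finset.coe_filter, Set.mem_setOf_eq, Finset.mem_product] at hz
      simp only [hRs, Finset.coe_filter, Set.mem_setOf_eq]
      exact ⟨hz.1.2, hz.2.1⟩
  refine hcard.trans ((Finset.sum_le_sum hr).trans ?_)
  rw [Finset.sum_comm]
  calc _ ≤ ∑ g ∈ q.divisors, 8 * R := by
        apply Finset.sum_le_sum
        intro g hg
        have hg0 : 0 < g := Nat.pos_of_mem_divisors hg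
        have := card_multiples R (Nat.gcd g (q/g)) (Nat.gcd_pos_of_pos_left _ hg0)
        refine le_trans (le_of_eq ?_) this
        rw [← Finset.sum_filter, Finset.sum_const, hRs, Finset.filter_filter, smul_eq_mul, mul_comm]
    _ = _ := by rw [Finset.sum_const, smul_eq_mul]; ring


lemma quad_core (α β γ η p e κ δ N M : ℝ)
    (hβ : 1 ≤ β) (hη1 : β ≤ η) (hγ : η ≤ γ) (hα : γ ≤ α)
    (hM : 1 ≤ M) (hMN : M ≤ N)
    (hη : η * η ≤ 2 * M) (hαN : α * α ≤ 2 * N)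
    (hδ : 0 < δ) (hδN : 200 * δ * N^2 ≤ 1)
    (hΔ : |α + β - γ - η| ≤ δ)
    (hp : p = α^2 + γ^2 - β^2 - η^2) (hp1 : 1 ≤ p)
    (he : e = 2 * (α + β - γ - η) * (η - β) + (α + β - γ - η)^2)
    (hκ : κ = 68 * δ * N * √M) :
    p ≤ 4 * N ∧ |e| ≤ 4 * δ * √M ∧ κ < 1 ∧
    (4 * (α*γ)^2 - p^2 - 4 * (β*η)^2) - 4 * p * (β*η) = - 2 * e * (p + 2 * (β*η)) + e^2 ∧
    |(4 * (α*γ)^2 - p^2 - 4 * (β*η)^2) - 4 * p * (β*η)| ≤ κ := by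
  have hN1 : 1 ≤ N := hM.trans hMN
  set s := √M with hs
  have hs1 : 1 ≤ s := by rw [hs]; exact Real.one_le_sqrt.2 hM
  have hss : s * s = M := Real.mul_self_sqrt (by linarith)
  have hpN : p ≤ 4 * N := by
    have h1 : γ^2 ≤ α^2 := by gcongr; linarith
    have h2 := sq_nonneg β
    have h3 := sq_nonneg η
    have h4 : α * α = α^2 := by ring
    linarith
  have hNN : N ≤ N^2 := by nlinarith only [hN1]
  have hδN' : 200 * (δ * N) ≤ 1 := by
    have := mul_le_mul_of_nonneg_left hNN hδ.le
    linarith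
  have hδ1 : δ ≤ 1/200 := by
    have := mul_le_mul_of_nonneg_left hN1 hδ.le
    linarith
  have hηs : η ≤ 1.5 * s := by nlinarith only [hs1, hss, hη]
  have he1 : |e| ≤ 4 * δ * s := by
    set Δ := α + β - γ - η
    have h1 : |e| ≤ 2 * |Δ| * (η - β) + |Δ|^2 := by
      rw [he]
      refine (abs_add_le _ _).trans ?_
      rw [abs_mul, abs_mul, abs_of_nonneg (by linarith : 0 ≤ η - β), abs_pow]
      norm_num
    have h2 : 0 ≤ |Δ| := abs_nonneg _
    have h3 : 2 * |Δ| * (η - β) ≤ 2 * δ * (1.5 * s) := by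
      apply mul_le_mul (by linarith) (by linarith) (by linarith) (by linarith)
    have h4 : |Δ|^2 ≤ δ * s := by
      calc |Δ|^2 ≤ δ^2 := by gcongr
        _ = δ * δ := by ring
        _ ≤ δ * s := mul_le_mul_of_nonneg_left (by linarith) hδ.le
    linarith
  have hsN : s ≤ N := by nlinarith only [hs1, hss, hMN]
  have hκ1 : κ < 1 := by
    rw [hκ]
    have : δ * N * s ≤ δ * N^2 := by
      have h1 : 0 ≤ δ * N := by positivity
      have := mul_le_mul_of_nonneg_left hsN h1
      linarith
    linarith
  have hid : (4 * (α*γ)^2 - p^2 - 4 * (β*η)^2) - 4 * p * (β*η) = - 2 * e * (p + 2 * (β*η)) + e^2 := by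
    have h1 : 2 * (α * γ) = p + 2 * (β * η) - e := by rw [hp, he]; ring
    have h2 : 4 * (α*γ)^2 = (p + 2 * (β * η) - e)^2 := by rw [← h1]; ring
    rw [h2]; ring
  refine ⟨hpN, he1, hκ1, hid, ?_⟩
  rw [hid]
  have hC : β * η ≤ 2 * N := by nlinarith only [hβ, hη1, hη, hMN]
  have hC0 : 0 ≤ β * η := mul_nonneg (by linarith) (by linarith)
  have hesmall : |e| ≤ N := by
    refine he1.trans ?_
    have h1 := mul_le_mul_of_nonneg_left hsN hδ.le
    linarith
  have h0 : 0 ≤ |e| := abs_nonneg e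
  calc |-2 * e * (p + 2 * (β*η)) + e^2| ≤ |-2 * e * (p + 2 * (β*η))| + |e^2| := abs_add_le _ _
    _ = |e| * (2 * (p + 2 * (β * η)) + |e|) := by
        rw [abs_mul, abs_mul, abs_of_nonneg (by linarith : 0 ≤ p + 2 * (β*η)), abs_pow,
          show |(-2:ℝ)| = 2 by norm_num]
        ring
    _ ≤ (4 * δ * s) * (17 * N) := by
        apply mul_le_mul he1 (by linarith) (by positivity) (by positivity)
    _ = κ := by rw [hκ]; ring

lemma quad_nz (α β γ η p e κ δ N M : ℝ)
    (hβ : 1 ≤ β) (hη1 : β ≤ η) (hη2 : β < η → 1 ≤ η^2 - β^2)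
    (hM : 1 ≤ M) (hMN : M ≤ N)
    (hη : η * η ≤ 2 * M)
    (hδ : 0 < δ) (hδN : 200 * δ * N^2 ≤ 1)
    (hΔ : |α + β - γ - η| ≤ δ) (hΔ0 : α + β - γ - η ≠ 0) (hp1 : 1 ≤ p)
    (he : e = 2 * (α + β - γ - η) * (η - β) + (α + β - γ - η)^2)
    (he1 : |e| ≤ 4 * δ * √M) (hκ1 : κ < 1) (t : ℝ)
    (hid : t - 4 * p * (β*η) = - 2 * e * (p + 2 * (β*η)) + e^2)
    (hb : |t - 4 * p * (β*η)| ≤ κ) :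
    t^2 - 16 * p^2 * (β*η)^2 ≠ 0 ∧ |t^2 - 16 * p^2 * (β*η)^2| ≤ 9 * κ * p * (β * η) := by
  have hN1 : 1 ≤ N := hM.trans hMN
  set s := √M with hs
  have hs1 : 1 ≤ s := by rw [hs]; exact Real.one_le_sqrt.2 hM
  have hss : s * s = M := Real.mul_self_sqrt (by linarith)
  have hηs : η ≤ 1.5 * s := by nlinarith only [hs1, hss, hη]
  have hC1 : 1 ≤ β * η := one_le_mul_of_one_le_of_one_le hβ (by linarith)
  have hpC : 1 ≤ p * (β * η) := one_le_mul_of_one_le_of_one_le hp1 hC1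
  have hfac : t^2 - 16 * p^2 * (β*η)^2 = (t - 4 * p * (β*η)) * (t + 4 * p * (β*η)) := by ring
  have hb' := abs_le.1 hb
  have hsN : s ≤ N := by nlinarith only [hs1, hss, hMN]
  have hδs : 200 * (δ * s) ≤ 1 := by
    have : s ≤ N^2 := by nlinarith only [hN1, hsN]
    have := mul_le_mul_of_nonneg_left this hδ.le
    linarith
  constructor
  · intro h0
    rw [hfac] at h0
    rcases mul_eq_zero.1 h0 with h | h
    · rw [hid] at h
      have h1 : e * (e - 2 * (p + 2 * (β * η))) = 0 := by linear_combination h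
      rcases mul_eq_zero.1 h1 with h2 | h2
      · rw [he] at h2
        have h3 : (α + β - γ - η) * (2 * (η - β) + (α + β - γ - η)) = 0 := by linear_combination h2
        rcases mul_eq_zero.1 h3 with h4 | h4
        · exact hΔ0 h4
        · rcases hη1.eq_or_lt with h5 | h5
          · apply hΔ0; rw [← h5] at h4 ⊢; linarith
          · have h6 := hη2 h5
            have h7 : 2 * (η - β) ≤ δ := by
              have := (abs_le.1 hΔ).1
              linarith
            have h8 : η^2 - β^2 = (η - β) * (η + β) := by ring
            have h9 : (η - β) * (η + β) ≤ (δ / 2) * (3 * s) := by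
              apply mul_le_mul (by linarith) (by linarith) (by linarith) (by linarith)
            have h10 : (δ / 2) * (3 * s) = 1.5 * (δ * s) := by ring
            linarith
      · have h5 := abs_le.1 he1
        have h6 : 4 * δ * s = 4 * (δ * s) := by ring
        linarith [h5.2]
    · have h5 : t = - (4 * p * (β * η)) := by linarith
      have h6 : 4 * p * (β * η) = 4 * (p * (β * η)) := by ring
      linarith [hb'.1]
  · rw [hfac, abs_mul]
    have h1 : |t + 4 * p * (β * η)| ≤ 9 * p * (β * η) := by
      have h6 : 4 * p * (β * η) = 4 * (p * (β * η)) := by ring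
      have h7 : 9 * p * (β * η) = 9 * (p * (β * η)) := by ring
      rw [abs_le]; constructor <;> linarith [hb'.1, hb'.2]
    calc _ ≤ κ * (9 * p * (β * η)) := by
          apply mul_le_mul hb h1 (abs_nonneg _) (le_trans (abs_nonneg _) hb)
      _ = _ := by ring


abbrev Quad := ℕ × ℕ × ℕ × ℕ

def Dl (z : Quad) : ℝ := √(z.1:ℝ) + √(z.2.1:ℝ) - √(z.2.2.1:ℝ) - √(z.2.2.2:ℝ)

def qp (z : Quad) : ℤ := z.1 + z.2.2.1 - z.2.1 - z.2.2.2
def qt (z : Quad) : ℤ := 4 * (z.1 * z.2.2.1) - (qp z)^2 - 4 * (z.2.1 * z.2.2.2)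
def qr (z : Quad) : ℤ := (qt z)^2 - 16 * (qp z)^2 * (z.2.1 * z.2.2.2)

lemma quad_facts (N M m : ℕ) (hM : 1 ≤ M) (hMN : M ≤ N) (δ : ℝ) (hδ : 0 < δ)
    (hδN : 200 * δ * (N:ℝ)^2 ≤ 1) (z : Quad)
    (h2 : 1 ≤ z.2.1) (h24 : z.2.1 ≤ z.2.2.2) (h43 : z.2.2.2 ≤ z.2.2.1) (h31 : z.2.2.1 ≤ z.1)
    (h1N : z.1 < 2 * N) (h4M : z.2.2.2 < 2 * M) (h2m : z.2.1 < 2 * m)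
    (hD0 : Dl z ≠ 0) (hD : |Dl z| ≤ δ) :
    1 ≤ qp z ∧ qp z ≤ 4 * N ∧ 0 ≤ qt z ∧ (qt z : ℝ) ≤ 8 * qp z * (√(M:ℝ) * √(m:ℝ)) + 1 ∧
    qr z ≠ 0 ∧ |(qr z : ℝ)| ≤ 18 * (68 * δ * N * √(M:ℝ)) * qp z * (√(M:ℝ) * √(m:ℝ)) := by
  obtain ⟨n1, n2, n3, n4⟩ := z
  simp only at h2 h24 h43 h31 h1N h4M h2m
  unfold Dl at hD0 hD
  simp only at hD0 hD
  set α := √(n1:ℝ) with hα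
  set β := √(n2:ℝ) with hβ
  set γ := √(n3:ℝ) with hγ
  set η := √(n4:ℝ) with hη
  have sα : α^2 = n1 := Real.sq_sqrt (by positivity)
  have sβ : β^2 = n2 := Real.sq_sqrt (by positivity)
  have sγ : γ^2 = n3 := Real.sq_sqrt (by positivity)
  have sη : η^2 = n4 := Real.sq_sqrt (by positivity)
  have b1 : 1 ≤ β := Real.one_le_sqrt.2 (by exact_mod_cast h2)
  have b2 : β ≤ η := Real.sqrt_le_sqrt (by exact_mod_cast h24)
  have b3 : η ≤ γ := Real.sqrt_le_sqrt (by exact_mod_cast h43)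
  have b4 : γ ≤ α := Real.sqrt_le_sqrt (by exact_mod_cast h31)
  have hM' : (1:ℝ) ≤ M := by exact_mod_cast hM
  have hMN' : (M:ℝ) ≤ N := by exact_mod_cast hMN
  have hη' : η * η ≤ 2 * M := by
    rw [← sq, sη]; exact_mod_cast h4M.le
  have hα' : α * α ≤ 2 * N := by
    rw [← sq, sα]; exact_mod_cast h1N.le
  set p := qp (n1, n2, n3, n4) with hp
  have hpdef : p = n1 + n3 - n2 - n4 := rfl
  have hp1 : 1 ≤ p := by
    by_contra hcon
    apply hD0
    have e1 : n1 = n4 := by omega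
    have e2 : n3 = n2 := by omega
    rw [hα, hβ, hγ, hη, e1, e2]; ring
  have hp1' : (1:ℝ) ≤ p := by exact_mod_cast hp1
  have hpR : (p:ℝ) = α^2 + γ^2 - β^2 - η^2 := by
    rw [hpdef, sα, sβ, sγ, sη]; push_cast; ring
  obtain ⟨c1, c2, c3, c4, c5⟩ := quad_core α β γ η p _ _ δ N M b1 b2 b3 b4 hM' hMN' hη' hα' hδ hδN hD hpR hp1' rfl rfl
  set t := qt (n1, n2, n3, n4) with ht
  have htR : (t:ℝ) = 4 * (α*γ)^2 - p^2 - 4 * (β*η)^2 := by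
    rw [ht, mul_pow, mul_pow, sα, sβ, sγ, sη]; unfold qt; push_cast; rw [← hp]
  rw [← htR] at c4 c5
  have hη2 : β < η → 1 ≤ η^2 - β^2 := by
    intro h
    have : n2 < n4 := by
      rcases h24.eq_or_lt with h' | h'
      · rw [hβ, hη, h'] at h; exact absurd h (lt_irrefl _)
      · exact h'
    have : (n2:ℝ) + 1 ≤ n4 := by exact_mod_cast this
    rw [sη, sβ]; linarith
  obtain ⟨d1, d2⟩ := quad_nz α β γ η p _ _ δ N M b1 b2 hη2 hM' hMN' hη' hδ hδN hD hD0 hp1' rfl c2 c3 t c4 c5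
  have hrR : (qr (n1, n2, n3, n4) : ℝ) = (t:ℝ)^2 - 16 * p^2 * (β*η)^2 := by
    rw [mul_pow, sβ, sη]; unfold qr; push_cast; rw [← hp, ← ht]
  have hC : β * η ≤ 2 * (√(M:ℝ) * √(m:ℝ)) := by
    have e1 : (β * η)^2 ≤ (2 * (√(M:ℝ) * √(m:ℝ)))^2 := by
      rw [mul_pow, mul_pow, mul_pow, sβ, sη, Real.sq_sqrt (by positivity), Real.sq_sqrt (by positivity)]
      have g1 : (n2:ℝ) ≤ 2 * m := by exact_mod_cast h2m.le
      have g2 : (n4:ℝ) ≤ 2 * M := by exact_mod_cast h4M.le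
      calc (n2:ℝ) * n4 ≤ (2 * m) * (2 * M) := by gcongr
        _ = _ := by ring
    exact (pow_le_pow_iff_left₀ (by positivity) (by positivity) (by norm_num)).1 e1
  have c5' := abs_le.1 c5
  have hpos : 0 ≤ 4 * (p:ℝ) * (β * η) := by positivity
  refine ⟨hp1, by exact_mod_cast c1, ?_, ?_, ?_, ?_⟩
  · have : (-1:ℝ) < t := by linarith [c5'.1]
    have : (-1:ℤ) < t := by exact_mod_cast this
    omega
  · calc (t:ℝ) ≤ 4 * p * (β * η) + 1 := by linarith [c5'.2]
      _ ≤ 4 * p * (2 * (√(M:ℝ) * √(m:ℝ))) + 1 := by gcongr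
      _ = _ := by ring
  · intro h0
    apply d1
    rw [← hrR, h0]; simp
  · rw [hrR]
    refine d2.trans ?_
    calc _ ≤ 9 * (68 * δ * N * √(M:ℝ)) * p * (2 * (√(M:ℝ) * √(m:ℝ))) := by gcongr
      _ = _ := by ring

/-- triples in a union of blocks -/
lemma triple_count (p : ℕ) (hp : 1 ≤ p) (Y : ℝ) (hY : 0 ≤ Y) (R : ℝ) (hR : 0 ≤ R) (W : Finset (ℤ × ℤ))
    (hW : ∀ w ∈ W, 0 ≤ w.1 ∧ (w.1:ℝ) ≤ Y ∧ w.2 ≠ 0 ∧ |(w.2:ℝ)| ≤ R ∧ ((p:ℤ)^2) ∣ w.1^2 - w.2) :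
    (W.card : ℝ) ≤ (Y / (p:ℝ)^2 + 1) * (8 * R * (p^2).divisors.card) := by
  set q := p^2 with hq
  have hq1 : 1 ≤ q := Nat.one_le_pow _ _ hp
  have hq0 : (0:ℤ) < q := by exact_mod_cast hq1
  set J := ⌊Y / (q:ℝ)⌋₊ + 1 with hJ
  have hc : W.card ≤ ∑ j ∈ Finset.range J, 8 * ⌊R⌋₊ * q.divisors.card := by
    rw [Finset.card_eq_sum_card_fiberwise (f := fun w => (w.1 / (q:ℤ)).toNat) (t := Finset.range J)]
    · apply Finset.sum_le_sum
      intro j _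
      refine le_trans (Finset.card_le_card ?_) (lemmaS q hq1 (j * q) ⌊R⌋₊)
      intro w hw
      rw [Finset.mem_filter] at hw
      obtain ⟨w1, w2, w3, w4, w5⟩ := hW w hw.1
      have hj : w.1 / (q:ℤ) = j := by
        have := Int.ediv_nonneg w1 hq0.le
        have h := hw.2
        omega
      simp only [Finset.mem_filter, Finset.mem_product, Finset.mem_Ico, Finset.mem_Icc]
      have e1 := Int.mul_ediv_add_emod w.1 q
      have e2 := Int.emod_nonneg w.1 hq0.ne'
      have e3 := Int.emod_lt_of_pos w.1 hq0
      rw [hj] at e1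
      have hr : |w.2| ≤ (⌊R⌋₊ : ℤ) := by
        have : w.2.natAbs ≤ ⌊R⌋₊ := by
          apply Nat.le_floor
          rw [Nat.cast_natAbs]; push_cast; exact w4
        rw [Int.abs_eq_natAbs]; exact_mod_cast this
      rw [abs_le] at hr
      refine ⟨⟨⟨by linarith, by linarith⟩, hr⟩, w3, ?_⟩
      rw [hq]; push_cast; exact w5
    · intro w hw
      obtain ⟨w1, w2, w3, w4, w5⟩ := hW w hw
      simp only [Finset.coe_range, Set.mem_Iio]
      rw [hJ, Nat.lt_succ_iff]
      apply Nat.le_floor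
      rw [le_div_iff₀ (by exact_mod_cast hq0)]
      refine le_trans ?_ w2
      have : ((w.1 / (q:ℤ)).toNat : ℤ) * q ≤ w.1 := by
        rw [Int.toNat_of_nonneg (Int.ediv_nonneg w1 hq0.le)]
        exact Int.ediv_mul_le _ hq0.ne'
      exact_mod_cast this
  rw [Finset.sum_const, smul_eq_mul, Finset.card_range] at hc
  have hq' : (q:ℝ) = (p:ℝ)^2 := by rw [hq]; push_cast; rfl
  calc (W.card:ℝ) ≤ (J:ℝ) * (8 * ⌊R⌋₊ * q.divisors.card) := by exact_mod_cast hc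
    _ ≤ _ := by
      rw [hJ, ← hq']; push_cast
      gcongr
      · exact Nat.floor_le (by positivity)
      · exact Nat.floor_le hR

lemma countII (N M m : ℕ) (hM : 1 ≤ M) (hMN : M ≤ N) (hmN : m ≤ N) (δ : ℝ) (hδ : 0 < δ)
    (hδN : 200 * δ * (N:ℝ)^2 ≤ 1) (D : ℝ)
    (hDiv : ∀ k : ℕ, 1 ≤ k → k ≤ 16 * N^2 → (k.divisors.card : ℝ) ≤ D) (Q : Finset Quad)
    (hQ : ∀ z ∈ Q, 1 ≤ z.2.1 ∧ z.2.1 ≤ z.2.2.2 ∧ z.2.2.2 ≤ z.2.2.1 ∧ z.2.2.1 ≤ z.1 ∧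
      z.1 < 2 * N ∧ z.2.2.2 < 2 * M ∧ z.2.1 < 2 * m ∧ Dl z ≠ 0 ∧ |Dl z| ≤ δ) :
    (Q.card : ℝ) ≤ 700000 * D^3 * (δ * (N:ℝ)^3 * M * √(m:ℝ)) := by
  have hN : 1 ≤ N := hM.trans hMN
  have hD1 : 1 ≤ D := by
    have := hDiv 1 le_rfl (by nlinarith)
    simpa using this
  have hf : ∀ z ∈ Q, _ := fun z hz => by
    obtain ⟨a1, a2, a3, a4, a5, a6, a7, a8, a9⟩ := hQ z hz
    exact quad_facts N M m hM hMN δ hδ hδN z a1 a2 a3 a4 a5 a6 a7 a8 a9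
  set Φ : Quad → ℤ × ℤ × ℤ := fun z => (qp z, qt z, qr z) with hΦ
  set T := Q.image Φ with hT
  -- fibres
  have hfib : ∀ w ∈ T, (Q.filter (fun z => Φ z = w)).card ≤ ⌊D^2⌋₊ := by
    intro w hw
    rw [hT, Finset.mem_image] at hw
    obtain ⟨z0, hz0, rfl⟩ := hw
    obtain ⟨p1, _⟩ := hf z0 hz0
    have hAC : ∀ z ∈ Q, Φ z = Φ z0 → z.1 * z.2.2.1 = z0.1 * z0.2.2.1 ∧ z.2.1 * z.2.2.2 = z0.2.1 * z0.2.2.2 := by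
      intro z hz he
      simp only [hΦ, Prod.mk.injEq] at he
      obtain ⟨e1, e2, e3⟩ := he
      unfold qr at e3
      rw [e1, e2] at e3
      have e4 : 16 * (qp z0)^2 * ((z.2.1:ℤ) * z.2.2.2) = 16 * (qp z0)^2 * ((z0.2.1:ℤ) * z0.2.2.2) := by linarith
      have e5 := mul_left_cancel₀ (by positivity) e4
      unfold qt at e2
      rw [e1] at e2
      have e6 : (z.1:ℤ) * z.2.2.1 = z0.1 * z0.2.2.1 := by linarith
      exact ⟨by exact_mod_cast e6, by exact_mod_cast e5⟩
    obtain ⟨a1, a2, a3, a4, a5, a6, a7, a8, a9⟩ := hQ z0 hz0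
    set A := z0.1 * z0.2.2.1 with hA
    set C := z0.2.1 * z0.2.2.2 with hC
    have hA1 : 1 ≤ A := by apply Nat.one_le_iff_ne_zero.2; apply Nat.mul_ne_zero <;> omega
    have hC1 : 1 ≤ C := by apply Nat.one_le_iff_ne_zero.2; apply Nat.mul_ne_zero <;> omega
    have hA2 : A ≤ 16 * N^2 := by
      calc A ≤ (2*N) * (2*N) := Nat.mul_le_mul (by omega) (by omega)
        _ ≤ _ := by nlinarith
    have hC2 : C ≤ 16 * N^2 := by
      calc C ≤ (2*N) * (2*N) := Nat.mul_le_mul (by omega) (by omega)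
        _ ≤ _ := by nlinarith
    have hinj : (Q.filter (fun z => Φ z = Φ z0)).card ≤ (A.divisors ×ˢ C.divisors).card := by
      apply Finset.card_le_card_of_injOn (fun z => (z.1, z.2.1))
      · intro z hz
        simp only [Finset.coe_filter, Set.mem_setOf_eq] at hz
        obtain ⟨f1, f2⟩ := hAC z hz.1 hz.2
        simp only [Finset.coe_product, Set.mem_prod, Finset.mem_coe, Nat.mem_divisors]
        exact ⟨⟨⟨_, f1.symm⟩, by omega⟩, ⟨⟨_, f2.symm⟩, by omega⟩⟩
      · intro z hz z' hz' he
        simp only [Finset.coe_filter, Set.mem_setOf_eq] at hz hz'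
        obtain ⟨f1, f2⟩ := hAC z hz.1 hz.2
        obtain ⟨g1, g2⟩ := hAC z' hz'.1 hz'.2
        simp only [Prod.mk.injEq] at he
        obtain ⟨b1, b2, b3, b4, _⟩ := hQ z hz.1
        rw [← g1, ← he.1] at f1
        rw [← g2, ← he.2] at f2
        have k1 := Nat.eq_of_mul_eq_mul_left (by omega) f1
        have k2 := Nat.eq_of_mul_eq_mul_left (by omega) f2
        ext
        · exact he.1
        · exact he.2
        · exact k1
        · exact k2
    refine hinj.trans (Nat.le_floor ?_)
    rw [Finset.card_product, sq]; push_cast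
    have := hDiv A hA1 hA2
    have := hDiv C hC1 hC2
    gcongr
  have hQT : (Q.card:ℝ) ≤ D^2 * T.card := by
    have := Finset.card_le_mul_card_image Q ⌊D^2⌋₊ hfib
    calc (Q.card:ℝ) ≤ (⌊D^2⌋₊ : ℝ) * T.card := by exact_mod_cast this
      _ ≤ _ := by gcongr; exact Nat.floor_le (by positivity)
  set s := √(M:ℝ) * √(m:ℝ) with hs
  have hs0 : 0 ≤ s := by positivity
  set κ := 68 * δ * N * √(M:ℝ) with hκ
  have hκ0 : 0 ≤ κ := by positivity
  have hsN : s ≤ N := by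
    have h1 : √(M:ℝ) ≤ √(N:ℝ) := Real.sqrt_le_sqrt (by exact_mod_cast hMN)
    have h2 : √(m:ℝ) ≤ √(N:ℝ) := Real.sqrt_le_sqrt (by exact_mod_cast hmN)
    calc s ≤ √(N:ℝ) * √(N:ℝ) := by rw [hs]; gcongr
      _ = N := Real.mul_self_sqrt (by positivity)
  have hTc : (T.card:ℝ) ≤ ∑ p ∈ Finset.Icc 1 (4*N), (144 * κ * s * D * (16 * N)) := by
    have h1 : T.card = ∑ p ∈ Finset.Icc 1 (4*N), (T.filter (fun w => w.1.toNat = p)).card := by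
      apply Finset.card_eq_sum_card_fiberwise
      intro w hw
      rw [hT, Finset.coe_image] at hw
      obtain ⟨z, hz, rfl⟩ := hw
      obtain ⟨p1, p2, _⟩ := hf z hz
      simp only [hΦ, Finset.coe_Icc, Set.mem_Icc]
      omega
    rw [h1]; push_cast
    apply Finset.sum_le_sum
    intro p hp
    rw [Finset.mem_Icc] at hp
    have hp0 : (1:ℝ) ≤ p := by exact_mod_cast hp.1
    have hpN : (p:ℝ) ≤ 4 * N := by exact_mod_cast hp.2
    set W := (T.filter (fun w => w.1.toNat = p)).image Prod.snd with hW
    have hWc : (T.filter (fun w => w.1.toNat = p)).card = W.card := by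
      rw [hW, Finset.card_image_of_injOn]
      intro w hw w' hw' he
      simp only [Finset.coe_filter, Set.mem_setOf_eq] at hw hw'
      obtain ⟨hw, hwp⟩ := hw
      obtain ⟨hw', hwp'⟩ := hw'
      rw [hT, Finset.mem_image] at hw hw'
      obtain ⟨z, hz, rfl⟩ := hw
      obtain ⟨z', hz', rfl⟩ := hw'
      have q1 := (hf z hz).1
      have q2 := (hf z' hz').1
      simp only [hΦ] at hwp hwp' he ⊢
      have : qp z = qp z' := by omega
      rw [this, he]
    rw [hWc]
    have htr := triple_count p hp.1 (8 * p * s + 1) (by positivity) (18 * κ * p * s) (by positivity) W (by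
      intro w hw
      rw [hW, Finset.mem_image] at hw
      obtain ⟨w', hw', rfl⟩ := hw
      rw [Finset.mem_filter, hT, Finset.mem_image] at hw'
      obtain ⟨⟨z, hz, rfl⟩, hwp⟩ := hw'
      obtain ⟨q1, q2, q3, q4, q5, q6⟩ := hf z hz
      simp only [hΦ] at hwp ⊢
      have hpp : qp z = (p:ℤ) := by omega
      have hpR : ((qp z : ℤ):ℝ) = p := by rw [hpp]; simp
      rw [hpR] at q4 q6
      refine ⟨q3, q4, q5, q6, ?_⟩
      rw [← hpp]
      unfold qr
      exact ⟨16 * (z.2.1 * z.2.2.2), by ring⟩)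
    refine htr.trans ?_
    have hd : ((p^2).divisors.card : ℝ) ≤ D := by
      apply hDiv _ (Nat.one_le_pow _ _ hp.1)
      calc p^2 ≤ (4*N)^2 := Nat.pow_le_pow_left hp.2 2
        _ = _ := by ring
    calc _ ≤ ((8 * p * s + 1) / (p:ℝ)^2 + 1) * (8 * (18 * κ * p * s) * D) := by gcongr
      _ = 144 * κ * s * D * (8 * s + 1 / p + p) := by field_simp; ring
      _ ≤ 144 * κ * s * D * (16 * N) := by
        have h3 : 1 / (p:ℝ) ≤ 1 := by rw [div_le_one (by linarith)]; exact hp0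
        have h4 : (1:ℝ) ≤ N := by exact_mod_cast hN
        gcongr
        linarith
  rw [Finset.sum_const, nsmul_eq_mul] at hTc
  simp only [Nat.card_Icc, Nat.add_sub_cancel] at hTc
  have hMM : √(M:ℝ) * √(M:ℝ) = M := Real.mul_self_sqrt (by positivity)
  calc (Q.card:ℝ) ≤ D^2 * T.card := hQT
    _ ≤ D^2 * (((4*N:ℕ):ℝ) * (144 * κ * s * D * (16 * N))) := by gcongr
    _ = 626688 * D^3 * (δ * (N:ℝ)^3 * (√(M:ℝ) * √(M:ℝ)) * √(m:ℝ)) := by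
        rw [hκ, hs]; push_cast; ring
    _ ≤ _ := by rw [hMM]; gcongr; norm_num


def inBox (N₁ N₂ N₃ N₄ : ℕ) (z : Quad) : Prop :=
  z.1 ∈ Finset.Ico N₁ (2*N₁) ∧ z.2.1 ∈ Finset.Ico N₂ (2*N₂) ∧ z.2.2.1 ∈ Finset.Ico N₃ (2*N₃) ∧
    z.2.2.2 ∈ Finset.Ico N₄ (2*N₄)

lemma floor_close {x y δ : ℝ} (hδ : 0 < δ) (h : |x - y| ≤ δ) : |⌊x/δ⌋ - ⌊y/δ⌋| ≤ 1 := by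
  have h1 : |x/δ - y/δ| ≤ 1 := by
    rw [← sub_div, abs_div, abs_of_pos hδ, div_le_one hδ]; exact h
  rw [abs_le] at h1 ⊢
  have a1 := Int.floor_le (x/δ)
  have a2 := Int.lt_floor_add_one (x/δ)
  have a3 := Int.floor_le (y/δ)
  have a4 := Int.lt_floor_add_one (y/δ)
  constructor
  · have : (⌊y/δ⌋:ℝ) < ⌊x/δ⌋ + 2 := by linarith
    have : ⌊y/δ⌋ < ⌊x/δ⌋ + 2 := by exact_mod_cast this
    omega
  · have : (⌊x/δ⌋:ℝ) < ⌊y/δ⌋ + 2 := by linarith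
    have : ⌊x/δ⌋ < ⌊y/δ⌋ + 2 := by exact_mod_cast this
    omega

lemma card_le_close (N₁ N₂ N₃ N₄ : ℕ) (δ : ℝ) (hδ : 0 < δ) (Q : Finset Quad)
    (hQ : ∀ z ∈ Q, inBox N₁ N₂ N₃ N₄ z ∧ |Dl z| ≤ δ) :
    Q.card ≤ closeCount (dbox N₁ N₂) (dbox N₃ N₄) (bin δ) (bin δ) ∧
    Q.card ≤ closeCount (dbox N₃ N₄) (dbox N₁ N₂) (bin δ) (bin δ) := by
  have hmem : ∀ z ∈ Q, (z.1, z.2.1) ∈ dbox N₁ N₂ ∧ (z.2.2.1, z.2.2.2) ∈ dbox N₃ N₄ ∧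
      |bin δ (z.1, z.2.1) - bin δ (z.2.2.1, z.2.2.2)| ≤ 1 := by
    intro z hz
    obtain ⟨⟨h1, h2, h3, h4⟩, h5⟩ := hQ z hz
    refine ⟨Finset.mem_product.2 ⟨h1, h2⟩, Finset.mem_product.2 ⟨h3, h4⟩, ?_⟩
    apply floor_close hδ
    unfold Dl at h5
    convert h5 using 2
    simp only
    ring
  unfold closeCount
  constructor
  · apply Finset.card_le_card_of_injOn (fun z => ((z.1, z.2.1), (z.2.2.1, z.2.2.2)))
    · intro z hz
      obtain ⟨h1, h2, h3⟩ := hmem z hz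
      exact Finset.mem_coe.2 (Finset.mem_filter.2 ⟨Finset.mem_product.2 ⟨h1, h2⟩, h3⟩)
    · rintro ⟨a, b, c, d⟩ _ ⟨a', b', c', d'⟩ _ h
      simp only [Prod.mk.injEq] at h ⊢
      tauto
  · apply Finset.card_le_card_of_injOn (fun z => ((z.2.2.1, z.2.2.2), (z.1, z.2.1)))
    · intro z hz
      obtain ⟨h1, h2, h3⟩ := hmem z hz
      refine Finset.mem_coe.2 (Finset.mem_filter.2 ⟨Finset.mem_product.2 ⟨h2, h1⟩, ?_⟩)
      simp only
      rw [abs_sub_comm]; exact h3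
    · rintro ⟨a, b, c, d⟩ _ ⟨a', b', c', d'⟩ _ h
      simp only [Prod.mk.injEq] at h ⊢
      tauto

lemma count_R0 (N₁ N₂ N₃ N₄ : ℕ) (h1 : 1 ≤ N₁) (h21 : N₂ ≤ N₁) (h31 : N₃ ≤ N₁) (h41 : N₄ ≤ N₁)
    (δ w : ℝ) (hδ : 0 < δ) (hw : 0 ≤ w) (hw4 : w^4 = ((N₁:ℝ) * N₂ * N₃ * N₄)^3) (Q : Finset Quad)
    (hQ : ∀ z ∈ Q, inBox N₁ N₂ N₃ N₄ z ∧ |Dl z| ≤ δ) (hR : 1 < 8 * δ * √(N₁:ℝ)) :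
    (Q.card:ℝ) ≤ 14 * (√(N₁:ℝ) * δ) * w := by
  set s := √(N₁:ℝ) with hs
  have hs0 : 0 ≤ s := Real.sqrt_nonneg _
  set B := Finset.Ico N₂ (2*N₂) ×ˢ Finset.Ico N₃ (2*N₃) ×ˢ Finset.Ico N₄ (2*N₄) with hB
  have hBc : (B.card:ℝ) = (N₂:ℝ) * N₃ * N₄ := by
    rw [hB, Finset.card_product, Finset.card_product]
    simp only [Nat.card_Ico]
    rw [show 2 * N₂ - N₂ = N₂ by omega, show 2 * N₃ - N₃ = N₃ by omega, show 2 * N₄ - N₄ = N₄ by omega]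
    push_cast; ring
  have hfib : ∀ b ∈ B, ((Q.filter (fun z => z.2 = b)).card : ℝ) ≤ 14 * (s * δ) := by
    intro b _
    have hc : (Q.filter (fun z => z.2 = b)).card = ((Q.filter (fun z => z.2 = b)).image Prod.fst).card := by
      rw [Finset.card_image_of_injOn]
      intro z hz z' hz' h
      simp only [Finset.coe_filter, Set.mem_setOf_eq] at hz hz'
      exact Prod.ext h (hz.2.trans hz'.2.symm)
    rw [hc]
    have := card_le_of_diam ((Q.filter (fun z => z.2 = b)).image Prod.fst) (6 * (s * δ)) (by positivity) (by
      intro x hx y hy hxy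
      rw [Finset.mem_image] at hx hy
      obtain ⟨z, hz, rfl⟩ := hx
      obtain ⟨z', hz', rfl⟩ := hy
      rw [Finset.mem_filter] at hz hz'
      obtain ⟨⟨i1, _⟩, i2⟩ := hQ z hz.1
      obtain ⟨⟨j1, _⟩, j2⟩ := hQ z' hz'.1
      obtain ⟨a1, a2, a3⟩ := sqrt_box i1
      obtain ⟨b1, b2, b3⟩ := sqrt_box j1
      unfold Dl at i2 j2
      rw [hz.2] at i2
      rw [hz'.2] at j2
      rw [abs_le] at i2 j2
      have hd : √(z'.1:ℝ) - √(z.1:ℝ) ≤ 2 * δ := by linarith [i2.1, j2.2]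
      have e : (z'.1:ℝ) - z.1 = (√(z'.1:ℝ) - √(z.1:ℝ)) * (√(z'.1:ℝ) + √(z.1:ℝ)) := by
        linear_combination a3 - b3
      rw [e]
      calc _ ≤ 2 * δ * (3 * s) := by
            apply mul_le_mul hd (by linarith) (by positivity) (by positivity)
        _ = _ := by ring)
    nlinarith
  have hcard : (Q.card:ℝ) = ∑ b ∈ B, ((Q.filter (fun z => z.2 = b)).card : ℝ) := by
    rw [Finset.card_eq_sum_card_fiberwise (f := fun z => z.2) (t := B)]
    · push_cast; rfl
    · intro z hz
      obtain ⟨⟨_, i2, i3, i4⟩, _⟩ := hQ z hz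
      exact Finset.mem_coe.2 (Finset.mem_product.2 ⟨i2, Finset.mem_product.2 ⟨i3, i4⟩⟩)
  have hprod : (N₂:ℝ) * N₃ * N₄ ≤ w := by
    have : ((N₂:ℝ) * N₃ * N₄)^4 ≤ w^4 := by
      rw [hw4]
      have a2 : (N₂:ℝ) ≤ N₁ := by exact_mod_cast h21
      have a3 : (N₃:ℝ) ≤ N₁ := by exact_mod_cast h31
      have a4 : (N₄:ℝ) ≤ N₁ := by exact_mod_cast h41
      have a5 : (N₂:ℝ) * N₃ * N₄ ≤ N₁ * N₁ * N₁ := by gcongr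
      calc ((N₂:ℝ) * N₃ * N₄)^4 = (N₂ * N₃ * N₄)^3 * (N₂ * N₃ * N₄) := by ring
        _ ≤ ((N₂:ℝ) * N₃ * N₄)^3 * (N₁ * N₁ * N₁) := by gcongr
        _ = _ := by ring
    exact (pow_le_pow_iff_left₀ (by positivity) hw (by norm_num)).1 this
  rw [hcard]
  calc _ ≤ ∑ b ∈ B, 14 * (s * δ) := Finset.sum_le_sum hfib
    _ = ((N₂:ℝ) * N₃ * N₄) * (14 * (s * δ)) := by rw [Finset.sum_const, nsmul_eq_mul, hBc]
    _ ≤ w * (14 * (s * δ)) := by gcongr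
    _ = _ := by ring

lemma order_facts (N : ℕ) (δ : ℝ) (hR : 8 * δ * √(N:ℝ) ≤ 1) (z : Quad)
    (h1N : z.1 < 2 * N) (h2 : 1 ≤ z.2.1) (h21 : z.2.1 ≤ z.1) (h31 : z.2.2.1 ≤ z.1) (h43 : z.2.2.2 ≤ z.2.2.1)
    (hD : |Dl z| ≤ δ) : z.2.1 ≤ z.2.2.2 ∧ z.1 ≤ 4 * z.2.2.1 := by
  obtain ⟨n1, n2, n3, n4⟩ := z
  simp only at *
  unfold Dl at hD
  simp only at hD
  rw [abs_le] at hD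
  have hN : 1 ≤ N := by omega
  set s := √(N:ℝ) with hs
  have hs1 : 1 ≤ s := Real.one_le_sqrt.2 (by exact_mod_cast hN)
  have hss : s * s = N := Real.mul_self_sqrt (by positivity)
  have hδ0 : 0 ≤ δ := by linarith [hD.1, hD.2]
  have hδ1 : δ ≤ 1/8 := by nlinarith
  have sα : √(n1:ℝ) * √(n1:ℝ) = n1 := Real.mul_self_sqrt (by positivity)
  have sβ : √(n2:ℝ) * √(n2:ℝ) = n2 := Real.mul_self_sqrt (by positivity)
  have sγ : √(n3:ℝ) * √(n3:ℝ) = n3 := Real.mul_self_sqrt (by positivity)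
  have sη : √(n4:ℝ) * √(n4:ℝ) = n4 := Real.mul_self_sqrt (by positivity)
  have b1 : 1 ≤ √(n2:ℝ) := Real.one_le_sqrt.2 (by exact_mod_cast h2)
  have b2 : √(n2:ℝ) ≤ √(n1:ℝ) := Real.sqrt_le_sqrt (by exact_mod_cast h21)
  have b3 : √(n4:ℝ) ≤ √(n3:ℝ) := Real.sqrt_le_sqrt (by exact_mod_cast h43)
  have b4 : √(n3:ℝ) ≤ √(n1:ℝ) := Real.sqrt_le_sqrt (by exact_mod_cast h31)
  have h0 : 0 ≤ √(n3:ℝ) := Real.sqrt_nonneg _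
  have h0' : 0 ≤ √(n4:ℝ) := Real.sqrt_nonneg _
  have b5 : √(n1:ℝ) ≤ 1.5 * s := by
    have : (n1:ℝ) ≤ 2 * N := by exact_mod_cast h1N.le
    nlinarith only [this, hs1, hss, sα]
  set α := √(n1:ℝ)
  set β := √(n2:ℝ)
  set γ := √(n3:ℝ)
  set η := √(n4:ℝ)
  constructor
  · by_contra hcon
    push Not at hcon
    have hc : (n4:ℝ) + 1 ≤ n2 := by exact_mod_cast hcon
    have e1 : (β - η) * (β + η) = n2 - n4 := by linear_combination sβ - sη
    have e2 : β - η ≤ δ := by linarith [hD.2]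
    have e3 : (β - η) * (β + η) ≤ δ * (3 * s) := by
      apply mul_le_mul e2 (by linarith) (by linarith) hδ0
    linarith
  · have e1 : α ≤ 2 * γ := by linarith [hD.2]
    have e2 : (n1:ℝ) ≤ 4 * n3 := by
      rw [← sα, ← sγ]
      nlinarith only [e1, h0, b1, b2]
    exact_mod_cast e2

lemma le_of_sq_le_sq_aux {a b : ℝ} (h : a ^ 2 ≤ b ^ 2) (hb : 0 ≤ b) : a ≤ b := abs_le_of_sq_le_sq' h hb |>.2


lemma count_R1 (N₁ N₂ N₃ N₄ : ℕ) (h2 : 1 ≤ N₂) (h4 : 1 ≤ N₄) (h21 : N₂ ≤ N₁) (h43 : N₄ ≤ N₃)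
    (h31 : N₃ ≤ N₁) (h13 : N₁ ≤ 8 * N₃) (η w : ℝ) (hη : 0 < η) (hw : 0 ≤ w)
    (hw4 : w ^ 4 = ((N₁:ℝ) * N₂ * N₃ * N₄) ^ 3) (Q : Finset Quad)
    (hQ : ∀ z ∈ Q, inBox N₁ N₂ N₃ N₄ z ∧ |Dl z| ≤ η ^ 4)
    (hR : 8 * η ^ 4 * √(N₁:ℝ) ≤ 1) (hR2 : 1 < 200 * η ^ 4 * (N₁:ℝ) ^ 2) :
    (Q.card : ℝ) ≤ (1800 * η + 45000 * (√(N₁:ℝ) * η ^ 4)) * w := by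
  have hδ : 0 < η ^ 4 := by positivity
  obtain ⟨hX, -⟩ := card_le_close N₁ N₂ N₃ N₄ (η ^ 4) hδ Q hQ
  have hsq := closeCount_sq (dbox N₁ N₂) (dbox N₃ N₄) (bin (η ^ 4)) (bin (η ^ 4))
  have hX2 : ((Q.card : ℕ) : ℝ) ^ 2 ≤ 9 * ((eng (dbox N₁ N₂) (bin (η ^ 4)) : ℝ) *
      (eng (dbox N₃ N₄) (bin (η ^ 4)) : ℝ)) := by
    have : Q.card ^ 2 ≤ 9 * (eng (dbox N₁ N₂) (bin (η ^ 4)) * eng (dbox N₃ N₄) (bin (η ^ 4))) :=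
      le_trans (Nat.pow_le_pow_left hX 2) hsq
    exact_mod_cast this
  have hs31 : √(N₃:ℝ) ≤ √(N₁:ℝ) := Real.sqrt_le_sqrt (by exact_mod_cast h31)
  have hs21 : √(N₂:ℝ) ≤ √(N₁:ℝ) := Real.sqrt_le_sqrt (by exact_mod_cast h21)
  have hs41 : √(N₄:ℝ) ≤ √(N₁:ℝ) := Real.sqrt_le_sqrt (by exact_mod_cast (h43.trans h31))
  have hE1 := energy_le N₁ N₂ h2 h21 (η ^ 4) hδ hR
  have hE2 := energy_le N₃ N₄ h4 h43 (η ^ 4) hδ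
    (le_trans (mul_le_mul_of_nonneg_left hs31 (by positivity)) hR)
  have c1 : (1:ℝ) ≤ N₁ := by exact_mod_cast h2.trans h21
  have c31 : (N₃:ℝ) ≤ N₁ := by exact_mod_cast h31
  have c13 : (N₁:ℝ) ≤ 8 * N₃ := by exact_mod_cast h13
  set s := √(N₁:ℝ) with hs
  set r := √(N₂:ℝ) with hr
  set q := √(N₄:ℝ) with hq
  set t := √(N₃:ℝ) with ht
  have s2 : s ^ 2 = N₁ := Real.sq_sqrt (by positivity)
  have r2 : r ^ 2 = N₂ := Real.sq_sqrt (by positivity)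
  have q2 : q ^ 2 = N₄ := Real.sq_sqrt (by positivity)
  have s0 : 0 < s := Real.sqrt_pos.2 (by linarith)
  have r0 : 0 ≤ r := Real.sqrt_nonneg _
  have q0 : 0 ≤ q := Real.sqrt_nonneg _
  have t0 : 0 ≤ t := Real.sqrt_nonneg _
  set δ := η ^ 4 with hδd
  set u := 30 + 3000 * δ * s ^ 2 with hu
  have u0 : 0 < u := by positivity
  have hE1' : (eng (dbox N₁ N₂) (bin δ) : ℝ) ≤ s ^ 2 * r ^ 3 * u := by
    refine hE1.trans ?_
    rw [← s2, ← r2, hu]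
    have : 3000 * δ * (s^2 * s) * (r^2)^2 ≤ 3000 * δ * (s^2 * s) * (r ^ 3 * s) := by
      apply mul_le_mul_of_nonneg_left _ (by positivity)
      calc (r^2)^2 = r^3 * r := by ring
        _ ≤ r^3 * s := mul_le_mul_of_nonneg_left hs21 (by positivity)
    linear_combination this
  have hE2' : (eng (dbox N₃ N₄) (bin δ) : ℝ) ≤ s ^ 2 * q ^ 3 * u := by
    refine hE2.trans ?_
    have e1 : 30 * ((N₃:ℝ) * (N₄ * q)) ≤ 30 * (s^2 * (q^2 * q)) := by
      rw [← q2, s2]; gcongr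
    have e2 : 3000 * δ * ((N₃:ℝ) * t) * (N₄:ℝ)^2 ≤ 3000 * δ * (s^2 * s) * (q ^ 3 * s) := by
      rw [← q2, s2]
      have : (q^2)^2 ≤ q^3 * s := by
        calc (q^2)^2 = q^3 * q := by ring
          _ ≤ q^3 * s := mul_le_mul_of_nonneg_left hs41 (by positivity)
      gcongr
    rw [hu]
    linear_combination e1 + e2
  have hX3 : ((Q.card : ℕ) : ℝ) ^ 2 ≤ 9 * ((s ^ 2 * r ^ 3 * u) * (s ^ 2 * q ^ 3 * u)) := by
    refine hX2.trans ?_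
    gcongr
  have hwa : s ^ 6 * r ^ 3 * q ^ 3 ≤ 23 * w ^ 2 := by
    apply le_of_sq_le_sq_aux _ (by positivity)
    have : (s ^ 6 * r ^ 3 * q ^ 3) ^ 2 ≤ 512 * w ^ 4 := by
      rw [hw4, ← r2, ← q2, ← s2]
      have h8 : (s^2)^3 ≤ 512 * (N₃:ℝ)^3 := by
        rw [s2]
        calc (N₁:ℝ)^3 ≤ (8 * N₃)^3 := by gcongr
          _ = _ := by ring
      have := mul_le_mul_of_nonneg_left h8 (show 0 ≤ (s^2 * r^2 * q^2)^3 by positivity)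
      linear_combination this
    nlinarith only [this, show 0 ≤ w ^ 4 by positivity]
  have hXs : (Q.card : ℝ) * s ≤ 15 * u * w := by
    apply le_of_sq_le_sq_aux _ (by positivity)
    have a1 := mul_le_mul_of_nonneg_right hX3 (show 0 ≤ s ^ 2 by positivity)
    have a2 := mul_le_mul_of_nonneg_left hwa (show 0 ≤ 9 * u ^ 2 by positivity)
    have a3 : 0 ≤ u ^ 2 * w ^ 2 := by positivity
    linear_combination a1 + a2 + 18 * a3
  have hηs : 1 < 4 * η * s := by
    by_contra hc
    push Not at hc
    have := pow_le_one₀ (n := 4) (by positivity) hc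
    rw [← s2] at hR2
    nlinarith only [this, hR2, show 0 ≤ δ * (s^2)^2 by positivity, hδd, show (4 * η * s)^4 = 256 * (η^4 * (s^2)^2) by ring]
  have hus : u ≤ s * (120 * η + 3000 * δ * s) := by
    rw [hu]; linear_combination 30 * hηs
  have : (Q.card : ℝ) * s ≤ ((1800 * η + 45000 * (s * δ)) * w) * s := by
    have := mul_le_mul_of_nonneg_left hus (show 0 ≤ 15 * w by positivity)
    linear_combination hXs + this
  exact le_of_mul_le_mul_right this s0

lemma count_R2 (N₁ N₂ N₃ N₄ : ℕ) (h2 : 1 ≤ N₂) (h4 : 1 ≤ N₄) (h21 : N₂ ≤ N₁) (h43 : N₄ ≤ N₃)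
    (h31 : N₃ ≤ N₁) (h13 : N₁ ≤ 8 * N₃) (η w : ℝ) (hη : 0 < η) (hw : 0 ≤ w)
    (hw4 : w ^ 4 = ((N₁:ℝ) * N₂ * N₃ * N₄) ^ 3) (D : ℝ)
    (hDiv : ∀ k : ℕ, 1 ≤ k → k ≤ 16 * N₁ ^ 2 → (k.divisors.card : ℝ) ≤ D) (Q : Finset Quad)
    (hQ : ∀ z ∈ Q, inBox N₁ N₂ N₃ N₄ z ∧ |Dl z| ≤ η ^ 4)
    (hQ' : ∀ z ∈ Q, 1 ≤ z.2.1 ∧ z.2.1 ≤ z.2.2.2 ∧ z.2.2.2 ≤ z.2.2.1 ∧ z.2.2.1 ≤ z.1 ∧ Dl z ≠ 0)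
    (hR2 : 200 * η ^ 4 * (N₁:ℝ) ^ 2 ≤ 1) :
    (Q.card : ℝ) ≤ 20000 * D * (1 + Real.log N₁) * η * w := by
  have hδ : 0 < η ^ 4 := by positivity
  have h1 : 1 ≤ N₁ := h2.trans h21
  have c1 : (1:ℝ) ≤ N₁ := by exact_mod_cast h1
  have c2 : (1:ℝ) ≤ N₂ := by exact_mod_cast h2
  have c4 : (1:ℝ) ≤ N₄ := by exact_mod_cast h4
  have c3 : (1:ℝ) ≤ N₃ := by exact_mod_cast h4.trans h43
  have c31 : (N₃:ℝ) ≤ N₁ := by exact_mod_cast h31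
  have c13 : (N₁:ℝ) ≤ 8 * N₃ := by exact_mod_cast h13
  have c41 : (N₄:ℝ) ≤ N₁ := by exact_mod_cast h43.trans h31
  have hD1 : 1 ≤ D := by
    have := hDiv 1 le_rfl (by nlinarith [h1])
    simpa using this
  obtain ⟨-, hX⟩ := card_le_close N₁ N₂ N₃ N₄ (η ^ 4) hδ Q hQ
  have hcube := closeCount_cube (dbox N₃ N₄) (dbox N₁ N₂) (bin (η ^ 4)) (bin (η ^ 4))
  have hII := countII N₁ N₄ N₂ h4 (h43.trans h31) h21 (η ^ 4) hδ hR2 D hDiv Q (by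
    intro z hz
    obtain ⟨a, b, c, d, e⟩ := hQ' z hz
    obtain ⟨hb, hd⟩ := hQ z hz
    simp only [inBox, Finset.mem_Ico] at hb
    exact ⟨a, b, c, d, by omega, by omega, by omega, e, hd⟩)
  have hs31 : √(N₃:ℝ) ≤ √(N₁:ℝ) := Real.sqrt_le_sqrt (by exact_mod_cast h31)
  have hs21 : √(N₂:ℝ) ≤ √(N₁:ℝ) := Real.sqrt_le_sqrt (by exact_mod_cast h21)
  have hs41 : √(N₄:ℝ) ≤ √(N₁:ℝ) := Real.sqrt_le_sqrt (by exact_mod_cast (h43.trans h31))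
  have hsN : √(N₁:ℝ) ≤ N₁ := by
    rw [Real.sqrt_le_left (by linarith)]; nlinarith only [c1]
  have hR : 8 * η ^ 4 * √(N₁:ℝ) ≤ 1 := by
    have : η^4 * √(N₁:ℝ) ≤ η^4 * (N₁:ℝ)^2 :=
      mul_le_mul_of_nonneg_left (by nlinarith only [c1, hsN]) hδ.le
    have h0 : 0 ≤ η^4 * (N₁:ℝ)^2 := by positivity
    linarith
  have hR3 : η ^ 4 * ((N₃:ℝ) * √(N₃:ℝ)) ≤ 1 := by
    have : η^4 * ((N₃:ℝ) * √(N₃:ℝ)) ≤ η^4 * (N₁:ℝ)^2 := by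
      apply mul_le_mul_of_nonneg_left _ hδ.le
      calc (N₃:ℝ) * √(N₃:ℝ) ≤ N₁ * N₁ := by
            apply mul_le_mul c31 (hs31.trans hsN) (Real.sqrt_nonneg _) (by positivity)
        _ = _ := by ring
    have h0 : 0 ≤ η^4 * (N₁:ℝ)^2 := by positivity
    linarith
  have hE1 := energy_le N₁ N₂ h2 h21 (η ^ 4) hδ hR
  have hT := third_le N₃ N₄ h4 h43 (η ^ 4) hδ
    (le_trans (mul_le_mul_of_nonneg_left hs31 (by positivity)) hR) hR3
  have hl4 : Real.log N₄ ≤ Real.log N₁ := Real.log_le_log (by linarith) c41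
  have hl0 : 0 ≤ Real.log N₄ := Real.log_nonneg c4
  rw [dbox_card] at hcube
  set s := √(N₁:ℝ) with hs
  set r := √(N₂:ℝ) with hr
  set q := √(N₄:ℝ) with hq
  set t := √(N₃:ℝ) with ht
  have s2 : s ^ 2 = N₁ := Real.sq_sqrt (by positivity)
  have r2 : r ^ 2 = N₂ := Real.sq_sqrt (by positivity)
  have q2 : q ^ 2 = N₄ := Real.sq_sqrt (by positivity)
  have s0 : 0 < s := Real.sqrt_pos.2 (by linarith)
  have r0 : 0 ≤ r := Real.sqrt_nonneg _
  have q0 : 0 ≤ q := Real.sqrt_nonneg _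
  have t0 : 0 ≤ t := Real.sqrt_nonneg _
  set δ := η ^ 4 with hδd
  set l := 1 + Real.log N₁ with hl
  have hl1 : 1 ≤ l := by rw [hl]; linarith
  have hδN : δ * s ^ 2 ≤ 1 / 200 := by
    rw [s2]
    have : δ * (N₁:ℝ) ≤ δ * (N₁:ℝ)^2 :=
      mul_le_mul_of_nonneg_left (by nlinarith only [c1]) hδ.le
    linarith
  have hE1' : (eng (dbox N₁ N₂) (bin δ) : ℝ) ≤ 45 * (s ^ 2 * r ^ 3) := by
    refine hE1.trans ?_
    rw [← s2, ← r2]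
    have a1 : 3000 * δ * (s^2 * s) * (r^2)^2 ≤ 3000 * δ * (s^2 * s) * (r ^ 3 * s) := by
      apply mul_le_mul_of_nonneg_left _ (by positivity)
      calc (r^2)^2 = r^3 * r := by ring
        _ ≤ r^3 * s := mul_le_mul_of_nonneg_left hs21 (by positivity)
    have a2 := mul_le_mul_of_nonneg_left hδN (show 0 ≤ 3000 * (s^2 * r^3) by positivity)
    linear_combination a1 + a2
  have hT' : (N₄:ℝ) * (third (dbox N₃ N₄) (bin δ) : ℝ) ≤ 120009 * l * (s^2 * q^6) := by
    have b1 : (third (dbox N₃ N₄) (bin δ) : ℝ) ≤ 9 * (N₁ * N₄) + 120000 * (s * ((N₄:ℝ)^2 * q)) * l := by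
      refine hT.trans ?_
      have : 1 + Real.log N₄ ≤ l := by rw [hl]; linarith
      gcongr
    have b2 := mul_le_mul_of_nonneg_left b1 (show (0:ℝ) ≤ N₄ by positivity)
    refine b2.trans ?_
    have b3 : 9 * ((N₁:ℝ) * N₄ ^ 2) ≤ 9 * l * (s^2 * q^6) := by
      rw [s2, show q^6 = (q^2)^3 by ring, q2]
      have : (N₁:ℝ) * N₄ ^ 2 ≤ N₁ * N₄^3 :=
        mul_le_mul_of_nonneg_left (pow_le_pow_right₀ c4 (by norm_num)) (by positivity)
      have h' := mul_le_mul_of_nonneg_right hl1 (show 0 ≤ (N₁:ℝ) * N₄^3 by positivity)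
      linarith
    have b4 : s * ((N₄:ℝ)^3 * q) ≤ s^2 * q^6 := by
      rw [← q2]
      have := mul_le_mul_of_nonneg_left hs41 (show 0 ≤ s * q^6 by positivity)
      linear_combination this
    have b5 := mul_le_mul_of_nonneg_left b4 (show 0 ≤ 120000 * l by positivity)
    linear_combination b3 + b5
  set X : ℝ := (Q.card : ℝ) with hXd
  have X0 : 0 ≤ X := by positivity
  have hX3 : X ^ 3 ≤ 27 * ((third (dbox N₃ N₄) (bin δ) : ℝ) * ((s^2 * r^2) * (45 * (s ^ 2 * r ^ 3)))) := by
    have : X ^ 3 ≤ ((closeCount (dbox N₃ N₄) (dbox N₁ N₂) (bin δ) (bin δ) : ℕ) : ℝ) ^ 3 := by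
      apply pow_le_pow_left₀ X0
      rw [hXd]; exact_mod_cast hX
    refine (this.trans hcube).trans ?_
    push_cast
    rw [s2, r2] at *
    gcongr
  have hX4 : X ^ 4 ≤ (27 * ((third (dbox N₃ N₄) (bin δ) : ℝ) * ((s^2 * r^2) * (45 * (s ^ 2 * r ^ 3))))) *
      (700000 * D ^ 3 * (δ * (N₁:ℝ) ^ 3 * N₄ * r)) := by
    calc X ^ 4 = X ^ 3 * X := by ring
      _ ≤ _ := mul_le_mul hX3 hII X0 (by positivity)
  have hX5 : X ^ 4 ≤ 27 * 45 * 700000 * 120009 * (D ^ 3 * l * δ) * (s^12 * r^6 * q^6) := by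
    refine hX4.trans ?_
    rw [← s2]
    have := mul_le_mul_of_nonneg_left hT' (show 0 ≤ 27 * 45 * 700000 * D^3 * δ * (s^10 * r^6) by positivity)
    linear_combination this
  have hw5 : s^12 * r^6 * q^6 ≤ 512 * w ^ 4 := by
    rw [hw4, ← r2, ← q2, ← s2]
    have h8 : (s^2)^3 ≤ 512 * (N₃:ℝ)^3 := by
      rw [s2]
      calc (N₁:ℝ)^3 ≤ (8 * N₃)^3 := by gcongr
        _ = _ := by ring
    have := mul_le_mul_of_nonneg_left h8 (show 0 ≤ (s^2 * r^2 * q^2)^3 by positivity)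
    linear_combination this
  have hDl : D ^ 3 * l ≤ D ^ 4 * l ^ 4 :=
    mul_le_mul (pow_le_pow_right₀ hD1 (by norm_num)) (le_self_pow₀ hl1 (by norm_num))
      (by positivity) (by positivity)
  apply le_of_pow_le_pow_left₀ (by norm_num : (4:ℕ) ≠ 0) (by positivity)
  have d1 := mul_le_mul_of_nonneg_left hw5 (show 0 ≤ 27 * 45 * 700000 * 120009 * (D ^ 3 * l * δ) by positivity)
  have d2 := mul_le_mul_of_nonneg_left hDl (show 0 ≤ 27 * 45 * 700000 * 120009 * 512 * δ * w ^ 4 by positivity)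
  have d3 : 0 ≤ D ^ 4 * l ^ 4 * δ * w ^ 4 := by positivity
  calc X ^ 4 ≤ 27 * 45 * 700000 * 120009 * 512 * (D ^ 4 * l ^ 4 * δ * w ^ 4) := by
        linear_combination hX5 + d1 + d2
    _ ≤ 20000 ^ 4 * (D ^ 4 * l ^ 4 * δ * w ^ 4) := by
        apply mul_le_mul_of_nonneg_right _ d3; norm_num
    _ = (20000 * D * l * η * w) ^ 4 := by rw [hδd]; ring

lemma count_main (N₁ N₂ N₃ N₄ : ℕ) (h2 : 1 ≤ N₂) (h4 : 1 ≤ N₄) (h21 : N₂ ≤ N₁) (h43 : N₄ ≤ N₃)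
    (h31 : N₃ ≤ N₁) (η w : ℝ) (hη : 0 < η) (hw : 0 ≤ w)
    (hw4 : w ^ 4 = ((N₁:ℝ) * N₂ * N₃ * N₄) ^ 3) (D : ℝ)
    (hDiv : ∀ k : ℕ, 1 ≤ k → k ≤ 16 * N₁ ^ 2 → (k.divisors.card : ℝ) ≤ D) (Q : Finset Quad)
    (hQ : ∀ z ∈ Q, inBox N₁ N₂ N₃ N₄ z ∧ z.2.2.1 ≤ z.1 ∧ z.2.2.2 ≤ z.2.2.1 ∧ z.2.1 ≤ z.1 ∧
      Dl z ≠ 0 ∧ |Dl z| ≤ η ^ 4) :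
    (Q.card : ℝ) ≤ 45000 * D * (1 + Real.log N₁) * w * (η + √(N₁:ℝ) * η ^ 4) := by
  have h1 : 1 ≤ N₁ := h2.trans h21
  have c1 : (1:ℝ) ≤ N₁ := by exact_mod_cast h1
  have hD1 : 1 ≤ D := by
    have := hDiv 1 le_rfl (by nlinarith [h1])
    simpa using this
  have hl : 0 ≤ Real.log N₁ := Real.log_nonneg c1
  set l := 1 + Real.log N₁ with hld
  have hl1 : 1 ≤ l := by rw [hld]; linarith
  have hDl : 1 ≤ D * l := one_le_mul_of_one_le_of_one_le hD1 hl1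
  have hδ : 0 < η ^ 4 := by positivity
  set s := √(N₁:ℝ) with hs
  have s0 : 0 ≤ s := Real.sqrt_nonneg _
  have p1 : 0 ≤ η * w := by positivity
  have p2 : 0 ≤ s * η ^ 4 * w := by positivity
  have k1 := mul_le_mul_of_nonneg_right hDl p1
  have k2 := mul_le_mul_of_nonneg_right hDl p2
  have hbase : ∀ z ∈ Q, inBox N₁ N₂ N₃ N₄ z ∧ |Dl z| ≤ η ^ 4 := fun z hz => ⟨(hQ z hz).1, (hQ z hz).2.2.2.2.2⟩
  by_cases hR : 8 * η ^ 4 * s ≤ 1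
  · rcases Q.eq_empty_or_nonempty with rfl | ⟨z₀, hz₀⟩
    · simp only [Finset.card_empty, Nat.cast_zero]; positivity
    have hof : ∀ z ∈ Q, z.2.1 ≤ z.2.2.2 ∧ z.1 ≤ 4 * z.2.2.1 ∧ 1 ≤ z.2.1 := by
      intro z hz
      obtain ⟨hb, a, b, c, d, e⟩ := hQ z hz
      simp only [inBox, Finset.mem_Ico] at hb
      have := order_facts N₁ (η ^ 4) hR z (by omega) (by omega) c a b e
      exact ⟨this.1, this.2, by omega⟩
    have h13 : N₁ ≤ 8 * N₃ := by
      have hb := (hQ z₀ hz₀).1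
      have := (hof z₀ hz₀).2.1
      simp only [inBox, Finset.mem_Ico] at hb
      omega
    by_cases hR2 : 200 * η ^ 4 * (N₁:ℝ) ^ 2 ≤ 1
    · have := count_R2 N₁ N₂ N₃ N₄ h2 h4 h21 h43 h31 h13 η w hη hw hw4 D hDiv Q hbase (fun z hz =>
        ⟨(hof z hz).2.2, (hof z hz).1, (hQ z hz).2.2.1, (hQ z hz).2.1, (hQ z hz).2.2.2.2.1⟩) hR2
      rw [← hld] at this
      linear_combination this + 25000 * k1 + 45000 * k2 + 25000 * p1 + 45000 * p2
    · have := count_R1 N₁ N₂ N₃ N₄ h2 h4 h21 h43 h31 h13 η w hη hw hw4 Q hbase hR (not_le.1 hR2)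
      rw [← hs] at this
      linear_combination this + 45000 * k1 + 45000 * k2 + 43200 * p1
  · have := count_R0 N₁ N₂ N₃ N₄ h1 h21 h31 (h43.trans h31) (η ^ 4) w hδ hw hw4 Q hbase (not_le.1 hR)
    rw [← hs] at this
    linear_combination this + 45000 * k1 + 45000 * k2 + 45000 * p1 + 44986 * p2


lemma symm_step (S : Finset Quad) (F : Quad → ℝ) (σ : Quad → Quad) (hS : ∀ z ∈ S, σ z ∈ S)
    (hinv : ∀ z, σ (σ z) = z) (hF : ∀ z, F (σ z) = F z) (hF0 : ∀ z, 0 ≤ F z)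
    (P : Quad → Prop) [DecidablePred P] (hP : ∀ z, P z ∨ P (σ z)) :
    ∑ z ∈ S, F z ≤ 2 * ∑ z ∈ S.filter P, F z := by
  have e1 : ∑ z ∈ S.filter P, F z = ∑ z ∈ S, if P z then F z else 0 := Finset.sum_filter _ _
  have e2 : (∑ z ∈ S, if P (σ z) then F z else 0) = ∑ z ∈ S, if P z then F z else 0 := by
    refine Finset.sum_bij' (fun z _ => σ z) (fun z _ => σ z) hS hS (fun z _ => hinv z)
      (fun z _ => hinv z) ?_
    intro z _
    rw [hF]
  have : ∑ z ∈ S, F z ≤ ∑ z ∈ S, ((if P z then F z else 0) + (if P (σ z) then F z else 0)) := by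
    apply Finset.sum_le_sum
    intro z _
    have h0 := hF0 z
    rcases hP z with h | h
    · rw [if_pos h]; split_ifs <;> linarith
    · rw [if_pos h]; split_ifs <;> linarith
  rw [Finset.sum_add_distrib, e2, ← e1] at this
  linarith

lemma min_dyadic (τ b x : ℝ) (hτ : 0 < τ) (hb : 0 < b) (hb4 : b ^ 4 = 2) (hx : 0 < x) (L : ℕ)
    (hL : ∃ j < L, x ≤ (b ^ j / τ) ^ 4) :
    min (τ ^ 16) (τ ^ 12 / x) ≤
      ∑ j ∈ Finset.range L, if x ≤ (b ^ j / τ) ^ 4 then 2 * τ ^ 12 / (b ^ j / τ) ^ 4 else 0 := by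
  have hex : ∃ j, x ≤ (b ^ j / τ) ^ 4 := by obtain ⟨j, _, h⟩ := hL; exact ⟨j, h⟩
  set j := Nat.find hex with hj
  have hjs : x ≤ (b ^ j / τ) ^ 4 := Nat.find_spec hex
  have hjL : j < L := by
    obtain ⟨i, hi, h⟩ := hL
    exact lt_of_le_of_lt (Nat.find_min' hex h) hi
  have hsingle : (if x ≤ (b ^ j / τ) ^ 4 then 2 * τ ^ 12 / (b ^ j / τ) ^ 4 else 0) ≤
      ∑ j ∈ Finset.range L, if x ≤ (b ^ j / τ) ^ 4 then 2 * τ ^ 12 / (b ^ j / τ) ^ 4 else 0 :=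
    Finset.single_le_sum (f := fun j => if x ≤ (b ^ j / τ) ^ 4 then 2 * τ ^ 12 / (b ^ j / τ) ^ 4 else 0)
      (fun i _ => by split_ifs <;> positivity) (Finset.mem_range.2 hjL)
  refine le_trans ?_ hsingle
  rw [if_pos hjs]
  rcases Nat.eq_zero_or_pos j with h0 | h0
  · rw [h0]
    refine (min_le_left _ _).trans ?_
    rw [pow_zero, le_div_iff₀ (by positivity)]
    have : τ ^ 16 * (1 / τ) ^ 4 = τ ^ 12 := by field_simp
    rw [this]
    have : 0 < τ ^ 12 := by positivity
    linarith
  · refine (min_le_right _ _).trans ?_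
    have hlt : ¬ x ≤ (b ^ (j-1) / τ) ^ 4 := Nat.find_min hex (by omega)
    have heq : (b ^ j / τ) ^ 4 = 2 * (b ^ (j-1) / τ) ^ 4 := by
      obtain ⟨i, hi⟩ : ∃ i, j = i + 1 := ⟨j-1, by omega⟩
      rw [hi, Nat.add_sub_cancel, ← hb4]
      ring
    rw [heq, mul_div_mul_left _ _ (by norm_num)]
    gcongr
    exact (not_le.1 hlt).le

def Wt (z : Quad) : ℝ := ((z.1.divisors.card * z.2.1.divisors.card * z.2.2.1.divisors.card *
  z.2.2.2.divisors.card : ℕ) : ℝ) / ((z.1 : ℝ) * z.2.1 * z.2.2.1 * z.2.2.2) ^ ((3:ℝ)/4)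

lemma Wt_nonneg (z : Quad) : 0 ≤ Wt z := by unfold Wt; positivity

lemma fiber_bound (τ : ℝ) (hτ : 1 ≤ τ) (Y : ℕ) (hY1 : 1 ≤ Y) (hY : (Y:ℝ) ≤ τ ^ 6)
    (k₁ k₂ k₃ k₄ : ℕ) (η : ℝ) (hη : 1 ≤ η * τ) (A D : ℝ)
    (hA : ∀ n : ℕ, 1 ≤ n → n ≤ Y → (n.divisors.card : ℝ) ≤ A)
    (hDiv : ∀ k : ℕ, 1 ≤ k → k ≤ 16 * Y ^ 2 → (k.divisors.card : ℝ) ≤ D) (Q : Finset Quad)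
    (hQ : ∀ z ∈ Q, inBox (2^k₁) (2^k₂) (2^k₃) (2^k₄) z ∧ z.1 ≤ Y ∧ z.2.2.1 ≤ z.1 ∧
      z.2.2.2 ≤ z.2.2.1 ∧ z.2.1 ≤ z.1 ∧ Dl z ≠ 0 ∧ |Dl z| ≤ η ^ 4) :
    ∑ z ∈ Q, Wt z * (2 * τ ^ 12 / η ^ 4) ≤ 180000 * A ^ 4 * D * (1 + Real.log Y) * τ ^ 15 := by
  have hτ0 : 0 < τ := by linarith
  have hη0 : 0 < η := by
    by_contra h
    push Not at h
    nlinarith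
  have hA1 : 1 ≤ A := by simpa using hA 1 le_rfl hY1
  have hD1 : 1 ≤ D := by simpa using hDiv 1 le_rfl (by nlinarith)
  have hlY : 0 ≤ Real.log Y := Real.log_nonneg (by exact_mod_cast hY1)
  rcases Q.eq_empty_or_nonempty with rfl | ⟨z₀, hz₀⟩
  · simp only [Finset.sum_empty]; positivity
  have hpow : ∀ a b : ℕ, 2 ^ a < 2 * 2 ^ b → 2 ^ a ≤ 2 ^ b := by
    intro a b h
    rw [← pow_succ'] at h
    have := (Nat.pow_lt_pow_iff_right (by norm_num : 1 < 2)).1 h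
    exact Nat.pow_le_pow_right (by norm_num) (by omega)
  obtain ⟨hb, hzY, a1, a2, a3, -, -⟩ := hQ z₀ hz₀
  simp only [inBox, Finset.mem_Ico] at hb
  have h21 : 2 ^ k₂ ≤ 2 ^ k₁ := hpow _ _ (by omega)
  have h43 : 2 ^ k₄ ≤ 2 ^ k₃ := hpow _ _ (by omega)
  have h31 : 2 ^ k₃ ≤ 2 ^ k₁ := hpow _ _ (by omega)
  have h1Y : 2 ^ k₁ ≤ Y := by omega
  have hp1 : 1 ≤ 2 ^ k₁ := Nat.one_le_two_pow
  have hp2 : 1 ≤ 2 ^ k₂ := Nat.one_le_two_pow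
  have hp3 : 1 ≤ 2 ^ k₃ := Nat.one_le_two_pow
  have hp4 : 1 ≤ 2 ^ k₄ := Nat.one_le_two_pow
  generalize 2 ^ k₁ = N₁ at *
  generalize 2 ^ k₂ = N₂ at *
  generalize 2 ^ k₃ = N₃ at *
  generalize 2 ^ k₄ = N₄ at *
  have c1 : (1:ℝ) ≤ N₁ := by exact_mod_cast hp1
  have c2 : (1:ℝ) ≤ N₂ := by exact_mod_cast hp2
  have c3 : (1:ℝ) ≤ N₃ := by exact_mod_cast hp3
  have c4 : (1:ℝ) ≤ N₄ := by exact_mod_cast hp4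
  have c1Y : (N₁:ℝ) ≤ Y := by exact_mod_cast h1Y
  set Pr : ℝ := (N₁:ℝ) * N₂ * N₃ * N₄ with hPi
  have hPi0 : 0 < Pr := by positivity
  set w : ℝ := Pr ^ ((3:ℝ)/4) with hw
  have hw0 : 0 < w := by positivity
  have hw4 : w ^ 4 = Pr ^ 3 := by
    rw [hw, ← Real.rpow_natCast, ← Real.rpow_mul hPi0.le, ← Real.rpow_natCast]
    norm_num
  have hcount := count_main N₁ N₂ N₃ N₄ hp2 hp4 h21 h43 h31 η w hη0 hw0.le hw4 D
    (fun k hk hk' => hDiv k hk (hk'.trans (by gcongr))) Q (by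
      intro z hz
      obtain ⟨b0, b1, b2, b3, b4, b5, b6⟩ := hQ z hz
      exact ⟨b0, b2, b3, b4, b5, b6⟩)
  have hWt : ∀ z ∈ Q, Wt z ≤ A ^ 4 / w := by
    intro z hz
    obtain ⟨b0, b1, b2, b3, b4, b5, b6⟩ := hQ z hz
    simp only [inBox, Finset.mem_Ico] at b0
    unfold Wt
    have hd1 := hA z.1 (by omega) (by omega)
    have hd2 := hA z.2.1 (by omega) (by omega)
    have hd3 := hA z.2.2.1 (by omega) (by omega)
    have hd4 := hA z.2.2.2 (by omega) (by omega)
    have e1 : (N₁:ℝ) ≤ z.1 := by exact_mod_cast b0.1.1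
    have e2 : (N₂:ℝ) ≤ z.2.1 := by exact_mod_cast b0.2.1.1
    have e3 : (N₃:ℝ) ≤ z.2.2.1 := by exact_mod_cast b0.2.2.1.1
    have e4 : (N₄:ℝ) ≤ z.2.2.2 := by exact_mod_cast b0.2.2.2.1
    apply div_le_div₀ (by positivity) _ hw0
    · rw [hw]
      apply Real.rpow_le_rpow hPi0.le _ (by norm_num)
      rw [hPi]; gcongr
    · push_cast
      calc _ ≤ A * A * A * A := by gcongr
        _ = A ^ 4 := by ring
  have hsum : ∑ z ∈ Q, Wt z * (2 * τ ^ 12 / η ^ 4) ≤ (Q.card : ℝ) * (A ^ 4 / w * (2 * τ ^ 12 / η ^ 4)) := by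
    rw [← nsmul_eq_mul]
    apply Finset.sum_le_card_nsmul
    intro z hz
    exact mul_le_mul_of_nonneg_right (hWt z hz) (by positivity)
  refine hsum.trans ?_
  set s := √(N₁:ℝ) with hs
  have hs3 : s ≤ τ ^ 3 := by
    rw [hs, Real.sqrt_le_left (by positivity)]
    calc (N₁:ℝ) ≤ τ ^ 6 := c1Y.trans hY
      _ = _ := by ring
  have hlN : Real.log N₁ ≤ Real.log Y := Real.log_le_log (by linarith) c1Y
  have hlN0 : 0 ≤ Real.log N₁ := Real.log_nonneg c1
  have hkey : η + s * η ^ 4 ≤ 2 * τ ^ 3 * η ^ 4 := by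
    have i1 : 1 ≤ (η * τ) ^ 3 := one_le_pow₀ hη
    have i2 := mul_le_mul_of_nonneg_left i1 hη0.le
    have i3 := mul_le_mul_of_nonneg_right hs3 (show 0 ≤ η ^ 4 by positivity)
    linear_combination i2 + i3
  calc (Q.card : ℝ) * (A ^ 4 / w * (2 * τ ^ 12 / η ^ 4))
      ≤ (45000 * D * (1 + Real.log N₁) * w * (η + s * η ^ 4)) * (A ^ 4 / w * (2 * τ ^ 12 / η ^ 4)) :=
        mul_le_mul_of_nonneg_right hcount (by positivity)
    _ ≤ (45000 * D * (1 + Real.log Y) * w * (2 * τ ^ 3 * η ^ 4)) * (A ^ 4 / w * (2 * τ ^ 12 / η ^ 4)) := by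
        gcongr
    _ = _ := by field_simp; ring


def Fq (τ : ℝ) (z : Quad) : ℝ :=
  if Dl z ≠ 0 then Wt z * min (τ ^ 16) (τ ^ 12 / |Dl z|) else 0

lemma Fq_nonneg (τ : ℝ) (hτ : 0 < τ) (z : Quad) : 0 ≤ Fq τ z := by
  unfold Fq
  have := Wt_nonneg z
  split_ifs <;> positivity

def box4 (Y : ℕ) : Finset Quad :=
  Finset.Icc 1 Y ×ˢ (Finset.Icc 1 Y ×ˢ (Finset.Icc 1 Y ×ˢ Finset.Icc 1 Y))

lemma mem_box4 (Y : ℕ) (z : Quad) : z ∈ box4 Y ↔ (1 ≤ z.1 ∧ z.1 ≤ Y) ∧ (1 ≤ z.2.1 ∧ z.2.1 ≤ Y) ∧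
    (1 ≤ z.2.2.1 ∧ z.2.2.1 ≤ Y) ∧ (1 ≤ z.2.2.2 ∧ z.2.2.2 ≤ Y) := by
  simp only [box4, Finset.mem_product, Finset.mem_Icc]

lemma Fq_congr (τ : ℝ) (z z' : Quad) (h1 : |Dl z| = |Dl z'|) (h2 : Wt z = Wt z') :
    Fq τ z = Fq τ z' := by
  unfold Fq
  have : Dl z ≠ 0 ↔ Dl z' ≠ 0 := by rw [← abs_pos, h1, abs_pos]
  rw [h1, h2]
  simp only [this]

lemma symm_all (τ : ℝ) (hτ : 0 < τ) (Y : ℕ) :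
    ∑ z ∈ box4 Y, Fq τ z ≤ 8 * ∑ z ∈ (box4 Y).filter
      (fun z => z.2.1 ≤ z.1 ∧ z.2.2.2 ≤ z.2.2.1 ∧ z.2.2.1 ≤ z.1), Fq τ z := by
  have s1 := symm_step (box4 Y) (Fq τ) (fun z => (z.2.1, z.1, z.2.2.1, z.2.2.2))
    (by intro z; simp only [mem_box4]; tauto) (fun z => rfl)
    (fun z => Fq_congr τ _ _ (by simp only [Dl]; congr 1; ring)
      (by simp only [Wt]; congr 2 <;> ring)) (Fq_nonneg τ hτ) (fun z => z.2.1 ≤ z.1)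
    (fun z => le_total _ _)
  have s2 := symm_step ((box4 Y).filter (fun z => z.2.1 ≤ z.1)) (Fq τ)
    (fun z => (z.1, z.2.1, z.2.2.2, z.2.2.1))
    (by intro z; simp only [Finset.mem_filter, mem_box4]; tauto) (fun z => rfl)
    (fun z => Fq_congr τ _ _ (by simp only [Dl]; congr 1; ring)
      (by simp only [Wt]; congr 2 <;> ring)) (Fq_nonneg τ hτ) (fun z => z.2.2.2 ≤ z.2.2.1)
    (fun z => le_total _ _)
  have s3 := symm_step (((box4 Y).filter (fun z => z.2.1 ≤ z.1)).filter (fun z => z.2.2.2 ≤ z.2.2.1))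
    (Fq τ) (fun z => (z.2.2.1, z.2.2.2, z.1, z.2.1))
    (by intro z; simp only [Finset.mem_filter, mem_box4]; tauto) (fun z => rfl)
    (fun z => Fq_congr τ _ _ (by simp only [Dl]; rw [← abs_neg]; congr 1; ring)
      (by simp only [Wt]; congr 2 <;> ring)) (Fq_nonneg τ hτ) (fun z => z.2.2.1 ≤ z.1)
    (fun z => le_total _ _)
  have e : (((box4 Y).filter (fun z => z.2.1 ≤ z.1)).filter (fun z => z.2.2.2 ≤ z.2.2.1)).filter
      (fun z => z.2.2.1 ≤ z.1) = (box4 Y).filter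
      (fun z => z.2.1 ≤ z.1 ∧ z.2.2.2 ≤ z.2.2.1 ∧ z.2.2.1 ≤ z.1) := by
    ext z; simp only [Finset.mem_filter]; tauto
  rw [e] at s3
  linarith

lemma total_bound (τ : ℝ) (hτ : 1 ≤ τ) (Y : ℕ) (hY1 : 1 ≤ Y) (hY : (Y:ℝ) ≤ τ ^ 6)
    (L : ℕ) (hL1 : 1 ≤ L) (hL : 2 * τ ^ 7 ≤ 2 ^ (L - 1)) (hLY : Nat.log 2 Y < L) (A D : ℝ)
    (hA : ∀ n : ℕ, 1 ≤ n → n ≤ Y → (n.divisors.card : ℝ) ≤ A)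
    (hDiv : ∀ k : ℕ, 1 ≤ k → k ≤ 16 * Y ^ 2 → (k.divisors.card : ℝ) ≤ D) :
    ∑ z ∈ box4 Y, Fq τ z ≤
      8 * ((L:ℝ) ^ 5 * (180000 * A ^ 4 * D * (1 + Real.log Y) * τ ^ 15)) := by
  have hτ0 : 0 < τ := by linarith
  refine (symm_all τ hτ0 Y).trans ?_
  apply mul_le_mul_of_nonneg_left _ (by norm_num)
  set S := (box4 Y).filter (fun z => z.2.1 ≤ z.1 ∧ z.2.2.2 ≤ z.2.2.1 ∧ z.2.2.1 ≤ z.1) with hS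
  set B := 180000 * A ^ 4 * D * (1 + Real.log Y) * τ ^ 15 with hB
  obtain ⟨b, hb1, hb4⟩ : ∃ b : ℝ, 1 ≤ b ∧ b ^ 4 = 2 := by
    refine ⟨(2:ℝ) ^ ((1:ℝ)/4), Real.one_le_rpow (by norm_num) (by norm_num), ?_⟩
    rw [← Real.rpow_natCast, ← Real.rpow_mul (by norm_num)]
    norm_num
  have hb0 : 0 < b := by linarith
  have hmem : ∀ z ∈ S, ((1 ≤ z.1 ∧ z.1 ≤ Y) ∧ (1 ≤ z.2.1 ∧ z.2.1 ≤ Y) ∧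
      (1 ≤ z.2.2.1 ∧ z.2.2.1 ≤ Y) ∧ (1 ≤ z.2.2.2 ∧ z.2.2.2 ≤ Y)) ∧
      (z.2.1 ≤ z.1 ∧ z.2.2.2 ≤ z.2.2.1 ∧ z.2.2.1 ≤ z.1) := by
    intro z hz
    rw [hS, Finset.mem_filter, mem_box4] at hz
    exact hz
  have hsq : ∀ n : ℕ, n ≤ Y → √(n:ℝ) ≤ τ ^ 3 := by
    intro n hn
    rw [Real.sqrt_le_left (by positivity)]
    have : (n:ℝ) ≤ Y := by exact_mod_cast hn
    calc (n:ℝ) ≤ τ ^ 6 := this.trans hY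
      _ = _ := by ring
  have hpt : ∀ z ∈ S, Fq τ z ≤ ∑ j ∈ Finset.range L,
      if Dl z ≠ 0 ∧ |Dl z| ≤ (b ^ j / τ) ^ 4 then Wt z * (2 * τ ^ 12 / (b ^ j / τ) ^ 4) else 0 := by
    intro z hz
    unfold Fq
    by_cases h0 : Dl z ≠ 0
    · rw [if_pos h0]
      have hD2 : |Dl z| ≤ 2 * τ ^ 3 := by
        obtain ⟨⟨h1, h2, h3, h4⟩, -⟩ := hmem z hz
        have a1 := hsq _ h1.2
        have a2 := hsq _ h2.2
        have a3 := hsq _ h3.2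
        have a4 := hsq _ h4.2
        have b1 := Real.sqrt_nonneg (z.1:ℝ)
        have b2 := Real.sqrt_nonneg (z.2.1:ℝ)
        have b3 := Real.sqrt_nonneg (z.2.2.1:ℝ)
        have b4 := Real.sqrt_nonneg (z.2.2.2:ℝ)
        unfold Dl
        rw [abs_le]
        constructor <;> linarith
      have hm := min_dyadic τ b |Dl z| hτ0 hb0 hb4 (abs_pos.2 h0) L ⟨L - 1, by omega, by
        refine hD2.trans ?_
        rw [div_pow, le_div_iff₀ (by positivity), ← pow_mul, mul_comm (L-1) 4, pow_mul, hb4]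
        linear_combination hL⟩
      refine (mul_le_mul_of_nonneg_left hm (Wt_nonneg z)).trans (le_of_eq ?_)
      rw [Finset.mul_sum]
      apply Finset.sum_congr rfl
      intro j _
      by_cases h : |Dl z| ≤ (b ^ j / τ) ^ 4
      · rw [if_pos h, if_pos ⟨h0, h⟩]
      · rw [if_neg h, if_neg (fun h' => h h'.2), mul_zero]
    · rw [if_neg h0]
      apply Finset.sum_nonneg
      intro j _
      rw [if_neg (fun h' => h0 h'.1)]
  refine (Finset.sum_le_sum hpt).trans ?_
  rw [Finset.sum_comm]
  have hj : ∀ j ∈ Finset.range L, (∑ z ∈ S,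
      if Dl z ≠ 0 ∧ |Dl z| ≤ (b ^ j / τ) ^ 4 then Wt z * (2 * τ ^ 12 / (b ^ j / τ) ^ 4) else 0) ≤
      (L:ℝ) ^ 4 * B := by
    intro j _
    rw [← Finset.sum_filter]
    set R := S.filter (fun z => Dl z ≠ 0 ∧ |Dl z| ≤ (b ^ j / τ) ^ 4) with hR
    set g : Quad → Quad := fun z => (Nat.log 2 z.1, Nat.log 2 z.2.1, Nat.log 2 z.2.2.1, Nat.log 2 z.2.2.2) with hg
    set t : Finset Quad := Finset.range L ×ˢ (Finset.range L ×ˢ (Finset.range L ×ˢ Finset.range L)) with ht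
    have hlog : ∀ n : ℕ, n ≤ Y → Nat.log 2 n < L := fun n hn =>
      lt_of_le_of_lt (Nat.log_mono_right hn) hLY
    have hmaps : ∀ z ∈ R, g z ∈ t := by
      intro z hz
      obtain ⟨⟨h1, h2, h3, h4⟩, -⟩ := hmem z (Finset.mem_filter.1 hz).1
      simp only [ht, hg, Finset.mem_product, Finset.mem_range]
      exact ⟨hlog _ h1.2, hlog _ h2.2, hlog _ h3.2, hlog _ h4.2⟩
    rw [← Finset.sum_fiberwise_of_maps_to hmaps]
    have hcard : (t.card : ℝ) = (L:ℝ) ^ 4 := by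
      rw [ht]; simp only [Finset.card_product, Finset.card_range]; push_cast; ring
    rw [← hcard, ← nsmul_eq_mul]
    apply Finset.sum_le_card_nsmul
    intro k _
    apply fiber_bound τ hτ Y hY1 hY k.1 k.2.1 k.2.2.1 k.2.2.2 (b ^ j / τ) _ A D hA hDiv
    · intro z hz
      obtain ⟨hzR, hzk⟩ := Finset.mem_filter.1 hz
      obtain ⟨hzS, hz0, hzd⟩ := Finset.mem_filter.1 hzR
      obtain ⟨⟨h1, h2, h3, h4⟩, h5, h6, h7⟩ := hmem z hzS
      refine ⟨?_, h1.2, h7, h6, h5, hz0, hzd⟩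
      have hbx : ∀ n : ℕ, 1 ≤ n → n ∈ Finset.Ico (2 ^ Nat.log 2 n) (2 * 2 ^ Nat.log 2 n) := by
        intro n hn
        rw [Finset.mem_Ico]
        refine ⟨Nat.pow_log_le_self 2 (by omega), ?_⟩
        rw [← pow_succ']
        exact Nat.lt_pow_succ_log_self (by norm_num) n
      rw [← hzk]
      exact ⟨hbx _ h1.1, hbx _ h2.1, hbx _ h3.1, hbx _ h4.1⟩
    · rw [div_mul_cancel₀ _ hτ0.ne']
      exact one_le_pow₀ hb1
  have := Finset.sum_le_card_nsmul _ _ _ hj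
  rw [Finset.card_range, nsmul_eq_mul] at this
  refine this.trans (le_of_eq ?_)
  ring

theorem offdiag_core (ε : ℝ) (hε : 0 < ε) : ∃ C : ℝ, 0 < C ∧ ∀ T : ℝ, 10 ≤ T →
    (∑ z ∈ box4 ⌊T ^ ((3:ℝ)/4)⌋₊, Fq (T ^ ((1:ℝ)/8)) z) ≤ C * T ^ (2 - 1/8 + ε) := by
  set e := ε / 14 with he
  have he0 : 0 < e := by positivity
  obtain ⟨c, hc1, hc⟩ := aux_divisor_bound e he0
  refine ⟨8 * ((2 / e + 3) ^ 5 * (180000 * c ^ 4 * c * (1 + 1 / e))), by positivity, ?_⟩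
  intro T hT
  have hT0 : 0 < T := by linarith
  have hT1 : 1 ≤ T := by linarith
  set τ := T ^ ((1:ℝ)/8) with hτ
  have hτ1 : 1 ≤ τ := Real.one_le_rpow hT1 (by norm_num)
  have hτp : ∀ n : ℕ, τ ^ n = T ^ ((n:ℝ)/8) := by
    intro n
    rw [hτ, ← Real.rpow_natCast, ← Real.rpow_mul hT0.le]
    congr 1; ring
  set Y := ⌊T ^ ((3:ℝ)/4)⌋₊ with hYd
  have hYle : (Y:ℝ) ≤ T ^ ((3:ℝ)/4) := Nat.floor_le (by positivity)
  have hY6 : (Y:ℝ) ≤ τ ^ 6 := by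
    rw [hτp]; convert hYle using 2; norm_num
  have hY1 : 1 ≤ Y := by
    rw [hYd]; apply Nat.le_floor
    rw [Nat.cast_one]; exact Real.one_le_rpow hT1 (by norm_num)
  have hYT : (Y:ℝ) ≤ T := by
    refine hYle.trans ?_
    calc T ^ ((3:ℝ)/4) ≤ T ^ (1:ℝ) := Real.rpow_le_rpow_of_exponent_le hT1 (by norm_num)
      _ = T := Real.rpow_one T
  set L := Nat.log 2 ⌊T⌋₊ + 3 with hL
  have hTe : 1 ≤ T ^ e := Real.one_le_rpow hT1 he0.le
  have hlogT : Real.log T ≤ T ^ e / e := Real.log_le_rpow_div hT0.le he0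
  have hLle : (L:ℝ) ≤ (2 / e + 3) * T ^ e := by
    have h1 : ((Nat.log 2 ⌊T⌋₊ : ℕ) : ℝ) ≤ 2 * Real.log T := by
      have hfl : 1 ≤ ⌊T⌋₊ := Nat.le_floor (by simpa using hT1)
      have hp : ((2 ^ Nat.log 2 ⌊T⌋₊ : ℕ) : ℝ) ≤ T := by
        refine le_trans ?_ (Nat.floor_le hT0.le)
        exact_mod_cast Nat.pow_log_le_self 2 (by omega)
      have := Real.log_le_log (by positivity) hp
      push_cast at this
      rw [Real.log_pow] at this
      have hl2 := Real.log_two_gt_d9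
      have hn : (0:ℝ) ≤ (Nat.log 2 ⌊T⌋₊ : ℕ) := by positivity
      nlinarith
    rw [hL]; push_cast
    have h2 : 2 * Real.log T ≤ 2 / e * T ^ e := by
      calc 2 * Real.log T ≤ 2 * (T ^ e / e) := by linarith
        _ = _ := by ring
    linarith
  have hlogY : 1 + Real.log Y ≤ (1 + 1 / e) * T ^ e := by
    have h1 : Real.log Y ≤ Real.log T := Real.log_le_log (by exact_mod_cast hY1) hYT
    have h2 : T ^ e / e = 1 / e * T ^ e := by ring
    linarith
  have hlog0 : 0 ≤ Real.log Y := Real.log_nonneg (by exact_mod_cast hY1)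
  have hb := total_bound τ hτ1 Y hY1 hY6 L (by omega) (by
      have h1 : T ≤ 2 ^ (Nat.log 2 ⌊T⌋₊ + 1) := by
        have h2 : ⌊T⌋₊ + 1 ≤ 2 ^ (Nat.log 2 ⌊T⌋₊ + 1) := Nat.lt_pow_succ_log_self (by norm_num) _
        have h3 : ((⌊T⌋₊ : ℝ)) + 1 ≤ 2 ^ (Nat.log 2 ⌊T⌋₊ + 1) := by exact_mod_cast h2
        linarith [Nat.lt_floor_add_one T]
      have h4 : τ ^ 7 ≤ T := by
        rw [hτp]
        calc T ^ (((7:ℕ):ℝ)/8) ≤ T ^ (1:ℝ) := Real.rpow_le_rpow_of_exponent_le hT1 (by norm_num)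
          _ = T := Real.rpow_one T
      have h5 : L - 1 = (Nat.log 2 ⌊T⌋₊ + 1) + 1 := by omega
      rw [h5, pow_succ (2:ℝ)]
      linarith) (by
      have : Nat.log 2 Y ≤ Nat.log 2 ⌊T⌋₊ := Nat.log_mono_right (Nat.le_floor hYT)
      omega) (c * T ^ e) (c * T ^ (4 * e)) (by
      intro n hn hnY
      refine (hc n hn).trans ?_
      have : (n:ℝ) ≤ T := le_trans (by exact_mod_cast hnY) hYT
      gcongr) (by
      intro k hk hkY
      refine (hc k hk).trans ?_
      have h1 : (k:ℝ) ≤ 16 * (Y:ℝ) ^ 2 := by exact_mod_cast hkY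
      have h2 : (k:ℝ) ≤ T ^ 4 := by
        calc (k:ℝ) ≤ 16 * T ^ 2 := h1.trans (by gcongr)
          _ ≤ T ^ 2 * T ^ 2 := by
            apply mul_le_mul_of_nonneg_right _ (by positivity)
            nlinarith
          _ = T ^ 4 := by ring
      have h3 : T ^ (4 * e) = (T ^ 4) ^ e := by
        rw [Real.rpow_mul hT0.le]; norm_num
      rw [h3]
      gcongr)
  refine hb.trans ?_
  have h4e : T ^ (4 * e) = (T ^ e) ^ 4 := by
    rw [mul_comm, Real.rpow_mul hT0.le]; norm_num
  have hfin : T ^ (2 - 1/8 + ε) = τ ^ 15 * (T ^ e) ^ 14 := by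
    rw [hτp, ← Real.rpow_natCast (T ^ e), ← Real.rpow_mul hT0.le, ← Real.rpow_add hT0]
    congr 1; rw [he]; push_cast; ring
  rw [hfin, h4e]
  calc 8 * ((L:ℝ) ^ 5 * (180000 * (c * T ^ e) ^ 4 * (c * (T ^ e) ^ 4) * (1 + Real.log Y) * τ ^ 15))
      ≤ 8 * (((2 / e + 3) * T ^ e) ^ 5 * (180000 * (c * T ^ e) ^ 4 * (c * (T ^ e) ^ 4) *
        ((1 + 1 / e) * T ^ e) * τ ^ 15)) := by gcongr
    _ = _ := by ring

theorem offdiagonal_sum_bound_minus (ε : ℝ) (hε : 0 < ε) :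
    ∃ C : ℝ, 0 < C ∧ ∀ T : ℝ, 10 ≤ T →
      (∑ n₁ ∈ Finset.Icc 1 ⌊T ^ ((3:ℝ)/4)⌋₊, ∑ n₂ ∈ Finset.Icc 1 ⌊T ^ ((3:ℝ)/4)⌋₊,
       ∑ n₃ ∈ Finset.Icc 1 ⌊T ^ ((3:ℝ)/4)⌋₊, ∑ n₄ ∈ Finset.Icc 1 ⌊T ^ ((3:ℝ)/4)⌋₊,
        if Real.sqrt n₁ + Real.sqrt n₂ - Real.sqrt n₃ - Real.sqrt n₄ ≠ 0 then
          ((n₁.divisors.card * n₂.divisors.card * n₃.divisors.card * n₄.divisors.card : ℕ) : ℝ)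
              / ((n₁ : ℝ) * n₂ * n₃ * n₄) ^ ((3:ℝ)/4)
            * min (T ^ 2) (T ^ ((3:ℝ)/2)
                / |Real.sqrt n₁ + Real.sqrt n₂ - Real.sqrt n₃ - Real.sqrt n₄|)
        else 0)
      ≤ C * T ^ (2 - 1/8 + ε) := by
  obtain ⟨C, hC, h⟩ := offdiag_core ε hε
  refine ⟨C, hC, fun T hT => le_trans (le_of_eq ?_) (h T hT)⟩
  have hT0 : 0 ≤ T := by linarith
  have h16 : (T ^ ((1:ℝ)/8)) ^ 16 = T ^ 2 := by
    rw [← Real.rpow_natCast, ← Real.rpow_mul hT0, ← Real.rpow_natCast]; norm_num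
  have h12 : (T ^ ((1:ℝ)/8)) ^ 12 = T ^ ((3:ℝ)/2) := by
    rw [← Real.rpow_natCast, ← Real.rpow_mul hT0]; norm_num
  unfold box4
  rw [Finset.sum_product]
  refine Finset.sum_congr rfl fun n₁ _ => ?_
  rw [Finset.sum_product]
  refine Finset.sum_congr rfl fun n₂ _ => ?_
  rw [Finset.sum_product]
  refine Finset.sum_congr rfl fun n₃ _ => ?_
  refine Finset.sum_congr rfl fun n₄ _ => ?_
  unfold Fq Wt Dl
  rw [h16, h12]
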